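/- arXiv:1803.04568 — 2 statements merged into one kernel-verified Lean document; each statement's English description precedes it below -/
import Mathlib

section
/- There exist a probability density ϱ ∈ C^∞(ℝ²) and a C^∞ vector field b: ℝ² → ℝ² such that the equation Δϱ − div(ϱb) = 0 holds in the weak sense and |b|ϱ ∈ L¹(ℝ²), but |∇ϱ| does not belong to L¹(ℝ²). -/
open MeasureTheory Real

noncomputable section

/-- First partial derivative (with respect to the first coordinate) on `ℝ²`. -/
def pd1 (f : ℝ × ℝ → ℝ) (p : ℝ × ℝ) : ℝ := fderiv ℝ f p (1, 0)

/-- Second partial derivative (with respect to the second coordinate) on `ℝ²`. -/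
def pd2 (f : ℝ × ℝ → ℝ) (p : ℝ × ℝ) : ℝ := fderiv ℝ f p (0, 1)

/-- Test functions: smooth compactly supported functions on `ℝ²`. -/
def IsTest (φ : ℝ × ℝ → ℝ) : Prop := ContDiff ℝ (⊤ : ℕ∞) φ ∧ HasCompactSupport φ

/-- Euclidean magnitude of a vector in `ℝ²`. -/
def emag (v : ℝ × ℝ) : ℝ := Real.sqrt (v.1 ^ 2 + v.2 ^ 2)


lemma pd_smooth {φ : ℝ × ℝ → ℝ} (h : ContDiff ℝ (⊤ : ℕ∞) φ) (v : ℝ × ℝ) :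
    ContDiff ℝ (⊤ : ℕ∞) (fun p => fderiv ℝ φ p v) :=
  (h.fderiv_right (m := ((⊤ : ℕ∞) : WithTop ℕ∞)) (by simp)).clm_apply contDiff_const

lemma pd_supp {φ : ℝ × ℝ → ℝ} (h : HasCompactSupport φ) (v : ℝ × ℝ) :
    HasCompactSupport (fun p => fderiv ℝ φ p v) :=
  (h.fderiv (𝕜 := ℝ)).comp_left (g := fun L : ℝ × ℝ →L[ℝ] ℝ => L v) (by simp)

lemma test_mul_int {φ g : ℝ × ℝ → ℝ} (h : ContDiff ℝ (⊤ : ℕ∞) φ) (hc : HasCompactSupport φ)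
    (hg : ContDiff ℝ (⊤ : ℕ∞) g) : Integrable (fun p => φ p * g p) :=
  (h.continuous.mul hg.continuous).integrable_of_hasCompactSupport hc.mul_right

lemma parts {φ g : ℝ × ℝ → ℝ} (h : ContDiff ℝ (⊤ : ℕ∞) φ) (hc : HasCompactSupport φ)
    (hg : ContDiff ℝ (⊤ : ℕ∞) g) (v : ℝ × ℝ) :
    ∫ p, φ p * fderiv ℝ g p v = - ∫ p, fderiv ℝ φ p v * g p := by
  apply integral_mul_fderiv_eq_neg_fderiv_mul_of_integrable
  · exact test_mul_int (pd_smooth h v) (pd_supp hc v) hg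
  · exact test_mul_int h hc (pd_smooth hg v)
  · exact test_mul_int h hc hg
  · intro x _; exact (h.differentiable (by simp)) x
  · intro x _; exact (hg.differentiable (by simp)) x

lemma pd_comm {φ : ℝ × ℝ → ℝ} (h : ContDiff ℝ (⊤ : ℕ∞) φ) (p : ℝ × ℝ) :
    pd1 (pd2 φ) p = pd2 (pd1 φ) p := by
  have hd : DifferentiableAt ℝ (fderiv ℝ φ) p :=
    (h.fderiv_right (m := ((⊤ : ℕ∞) : WithTop ℕ∞)) (by simp)).differentiable (by simp) p
  have hs : IsSymmSndFDerivAt ℝ φ p :=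
    h.contDiffAt.isSymmSndFDerivAt (by
      simp only [minSmoothness_of_isRCLikeNormedField]
      exact WithTop.coe_le_coe.2 (le_top : (2 : ℕ∞) ≤ ⊤))
  have e : ∀ v w : ℝ × ℝ, fderiv ℝ (fun q => fderiv ℝ φ q v) p w
      = fderiv ℝ (fderiv ℝ φ) p w v := by
    intro v w
    rw [fderiv_clm_apply hd (differentiableAt_const v)]
    simp
  change fderiv ℝ (fun q => fderiv ℝ φ q (0,1)) p (1,0) = fderiv ℝ (fun q => fderiv ℝ φ q (1,0)) p (0,1)
  rw [e, e]
  exact hs _ _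

lemma weak_form {φ r s : ℝ × ℝ → ℝ} (h : ContDiff ℝ (⊤ : ℕ∞) φ) (hc : HasCompactSupport φ)
    (hr : ContDiff ℝ (⊤ : ℕ∞) r) (hs : ContDiff ℝ (⊤ : ℕ∞) s) :
    ∫ p, ((pd1 (pd1 φ) p + pd2 (pd2 φ) p) * r p + pd1 φ p * (pd1 r p - pd2 s p)
      + pd2 φ p * (pd2 r p + pd1 s p)) = 0 := by
  have h1 : ContDiff ℝ (⊤ : ℕ∞) (pd1 φ) := pd_smooth h (1,0)
  have h2 : ContDiff ℝ (⊤ : ℕ∞) (pd2 φ) := pd_smooth h (0,1)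
  have c1 : HasCompactSupport (pd1 φ) := pd_supp hc (1,0)
  have c2 : HasCompactSupport (pd2 φ) := pd_supp hc (0,1)
  have A := parts h1 c1 hr (1,0)
  have B := parts h2 c2 hr (0,1)
  have C := parts h1 c1 hs (0,1)
  have D := parts h2 c2 hs (1,0)
  have E : ∫ p, fderiv ℝ (pd1 φ) p (0,1) * s p = ∫ p, fderiv ℝ (pd2 φ) p (1,0) * s p := by
    congr 1; ext p; congr 1; exact (pd_comm h p).symm
  have iA := test_mul_int h1 c1 (pd_smooth hr (1,0))
  have iB := test_mul_int h2 c2 (pd_smooth hr (0,1))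
  have iC := test_mul_int h1 c1 (pd_smooth hs (0,1))
  have iD := test_mul_int h2 c2 (pd_smooth hs (1,0))
  have jA := test_mul_int (pd_smooth h1 (1,0)) (pd_supp c1 (1,0)) hr
  have jB := test_mul_int (pd_smooth h2 (0,1)) (pd_supp c2 (0,1)) hr
  have : (fun p => ((pd1 (pd1 φ) p + pd2 (pd2 φ) p) * r p + pd1 φ p * (pd1 r p - pd2 s p)
      + pd2 φ p * (pd2 r p + pd1 s p))) = fun p =>
      ((((fderiv ℝ (pd1 φ) p (1,0) * r p + fderiv ℝ (pd2 φ) p (0,1) * r p)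
      + pd1 φ p * fderiv ℝ r p (1,0)) + pd2 φ p * fderiv ℝ r p (0,1))
      + pd2 φ p * fderiv ℝ s p (1,0)) - pd1 φ p * fderiv ℝ s p (0,1) := by
    ext p
    simp only [pd1, pd2]
    ring
  rw [this, integral_sub _ iC, integral_add _ iD, integral_add _ iB, integral_add _ iA,
    integral_add jA jB]
  · linarith
  · exact jA.add jB
  · exact (jA.add jB).add iA
  · exact ((jA.add jB).add iA).add iB
  · exact (((jA.add jB).add iA).add iB).add iD

/-- partial derivatives of complex valued functions and the Cauchy-Riemann operator -/
def dX (F : ℝ × ℝ → ℂ) (p : ℝ × ℝ) : ℂ := fderiv ℝ F p (1, 0)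
def dY (F : ℝ × ℝ → ℂ) (p : ℝ × ℝ) : ℂ := fderiv ℝ F p (0, 1)
def dbar (F : ℝ × ℝ → ℂ) (p : ℝ × ℝ) : ℂ := dX F p + Complex.I * dY F p

lemma dXY_smooth {F : ℝ × ℝ → ℂ} (h : ContDiff ℝ (⊤ : ℕ∞) F) (v : ℝ × ℝ) :
    ContDiff ℝ (⊤ : ℕ∞) (fun p => fderiv ℝ F p v) :=
  (h.fderiv_right (m := ((⊤ : ℕ∞) : WithTop ℕ∞)) (by simp)).clm_apply contDiff_const

lemma dbar_smooth {F : ℝ × ℝ → ℂ} (h : ContDiff ℝ (⊤ : ℕ∞) F) :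
    ContDiff ℝ (⊤ : ℕ∞) (dbar F) :=
  (dXY_smooth h (1,0)).add (contDiff_const.mul (dXY_smooth h (0,1)))

lemma fderiv_re {F : ℝ × ℝ → ℂ} (h : ContDiff ℝ (⊤ : ℕ∞) F) (p v : ℝ × ℝ) :
    fderiv ℝ (fun q => (F q).re) p v = (fderiv ℝ F p v).re := by
  have hF := (h.differentiable (by simp) p).hasFDerivAt
  have := (Complex.reCLM.hasFDerivAt (x := F p)).comp p hF
  have h2 : fderiv ℝ (fun q => (F q).re) p = Complex.reCLM.comp (fderiv ℝ F p) := this.fderiv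
  rw [h2]; rfl

lemma fderiv_im {F : ℝ × ℝ → ℂ} (h : ContDiff ℝ (⊤ : ℕ∞) F) (p v : ℝ × ℝ) :
    fderiv ℝ (fun q => (F q).im) p v = (fderiv ℝ F p v).im := by
  have hF := (h.differentiable (by simp) p).hasFDerivAt
  have := (Complex.imCLM.hasFDerivAt (x := F p)).comp p hF
  have h2 : fderiv ℝ (fun q => (F q).im) p = Complex.imCLM.comp (fderiv ℝ F p) := this.fderiv
  rw [h2]; rfl

lemma emag_complex (z : ℂ) : emag (z.re, z.im) = ‖z‖ := by
  rw [Complex.norm_eq_sqrt_sq_add_sq]; rfl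

lemma reduction1 (F : ℝ × ℝ → ℂ) (hF : ContDiff ℝ (⊤ : ℕ∞) F) (hpos : ∀ p, 0 < (F p).re)
    (h1 : ∫ p, (F p).re = 1) (hd : Integrable (dbar F)) (hx : ¬ Integrable (dX F)) :
    ∃ (ϱ : ℝ × ℝ → ℝ) (b : ℝ × ℝ → ℝ × ℝ),
      ContDiff ℝ (⊤ : ℕ∞) ϱ ∧ (∀ p, 0 ≤ ϱ p) ∧ (∫ p, ϱ p = 1) ∧
      ContDiff ℝ (⊤ : ℕ∞) b ∧
      (∀ φ : ℝ × ℝ → ℝ, IsTest φ →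
        ∫ p, (pd1 (pd1 φ) p + pd2 (pd2 φ) p + fderiv ℝ φ p (b p)) * ϱ p = 0) ∧
      Integrable (fun p => emag (b p) * ϱ p) ∧
      ¬ Integrable (fun p => emag (pd1 ϱ p, pd2 ϱ p)) := by
  have hr : ContDiff ℝ (⊤ : ℕ∞) (fun p => (F p).re) := Complex.reCLM.contDiff.comp hF
  have hi : ContDiff ℝ (⊤ : ℕ∞) (fun p => (F p).im) := Complex.imCLM.contDiff.comp hF
  have hdb := dbar_smooth hF
  have hdr : ContDiff ℝ (⊤ : ℕ∞) (fun p => (dbar F p).re) := Complex.reCLM.contDiff.comp hdb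
  have hdi : ContDiff ℝ (⊤ : ℕ∞) (fun p => (dbar F p).im) := Complex.imCLM.contDiff.comp hdb
  have ere : ∀ p, (dbar F p).re = pd1 (fun p => (F p).re) p - pd2 (fun p => (F p).im) p := by
    intro p
    simp only [pd1, pd2, fderiv_re hF, fderiv_im hF, dbar, dX, dY]
    simp
    ring
  have eim : ∀ p, (dbar F p).im = pd2 (fun p => (F p).re) p + pd1 (fun p => (F p).im) p := by
    intro p
    simp only [pd1, pd2, fderiv_re hF, fderiv_im hF, dbar, dX, dY]
    simp
    ring
  refine ⟨fun p => (F p).re, fun p => ((dbar F p).re / (F p).re, (dbar F p).im / (F p).re),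
    hr, fun p => (hpos p).le, h1, ?_, ?_, ?_, ?_⟩
  · exact (hdr.div hr fun p => (hpos p).ne').prodMk (hdi.div hr fun p => (hpos p).ne')
  · rintro φ ⟨hφ, hc⟩
    rw [← weak_form hφ hc hr hi]
    congr 1
    ext p
    rw [← ere, ← eim]
    have : (((dbar F p).re / (F p).re, (dbar F p).im / (F p).re) : ℝ × ℝ)
      = ((dbar F p).re / (F p).re) • ((1:ℝ),(0:ℝ)) + ((dbar F p).im / (F p).re) • ((0:ℝ),(1:ℝ)) := by
      ext <;> simp
    simp only []
    rw [this, map_add, map_smul, map_smul]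
    have := (hpos p).ne'
    simp only [pd1, pd2, smul_eq_mul]
    field_simp
    ring
  · refine hd.norm.congr (Filter.Eventually.of_forall fun p => ?_)
    have hp := hpos p
    simp only []
    rw [← emag_complex]
    simp only [emag]
    rw [div_pow, div_pow, ← add_div, Real.sqrt_div (by positivity), Real.sqrt_sq hp.le]
    field_simp
  · intro H
    apply hx
    have hX : AEStronglyMeasurable (dX F) volume := (dXY_smooth hF (1,0)).continuous.aestronglyMeasurable
    refine (hd.norm.add (H.const_mul 2)).mono' hX (Filter.Eventually.of_forall fun p => ?_)
    have e1 : |(dX F p).re| ≤ emag (pd1 (fun p => (F p).re) p, pd2 (fun p => (F p).re) p) := by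
      have : (dX F p).re = pd1 (fun p => (F p).re) p := by
        simp only [pd1, fderiv_re hF, dX]
      rw [this]
      exact Real.abs_le_sqrt (by simp only []; nlinarith [sq_nonneg (pd2 (fun p => (F p).re) p)])
    have e2 : |(dX F p).im| ≤ ‖dbar F p‖ + emag (pd1 (fun p => (F p).re) p, pd2 (fun p => (F p).re) p) := by
      have : (dX F p).im = (dbar F p).im - pd2 (fun p => (F p).re) p := by
        rw [eim]
        simp only [pd1, pd2, fderiv_im hF, fderiv_re hF, dX]
        ring
      rw [this]
      refine (abs_sub _ _).trans (add_le_add (Complex.abs_im_le_norm _) ?_)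
      exact Real.abs_le_sqrt (by simp only []; nlinarith [sq_nonneg (pd1 (fun p => (F p).re) p)])
    refine (Complex.norm_le_abs_re_add_abs_im _).trans ?_
    simp only [Pi.add_apply]
    linarith

lemma reduction2 (F : ℝ × ℝ → ℂ) (hF : ContDiff ℝ (⊤ : ℕ∞) F) (hpos : ∀ p, 0 < (F p).re)
    (h1 : Integrable (fun p => (F p).re)) (hd : Integrable (dbar F)) (hx : ¬ Integrable (dX F)) :
    ∃ (ϱ : ℝ × ℝ → ℝ) (b : ℝ × ℝ → ℝ × ℝ),
      ContDiff ℝ (⊤ : ℕ∞) ϱ ∧ (∀ p, 0 ≤ ϱ p) ∧ (∫ p, ϱ p = 1) ∧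
      ContDiff ℝ (⊤ : ℕ∞) b ∧
      (∀ φ : ℝ × ℝ → ℝ, IsTest φ →
        ∫ p, (pd1 (pd1 φ) p + pd2 (pd2 φ) p + fderiv ℝ φ p (b p)) * ϱ p = 0) ∧
      Integrable (fun p => emag (b p) * ϱ p) ∧
      ¬ Integrable (fun p => emag (pd1 ϱ p, pd2 ϱ p)) := by
  have hI : 0 < ∫ p, (F p).re := by
    rw [integral_pos_iff_support_of_nonneg (fun p => (hpos p).le) h1]
    have : Function.support (fun p => (F p).re) = Set.univ := by
      ext p; simp [(hpos p).ne']
    rw [this]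
    simp
  set c : ℝ := (∫ p, (F p).re)⁻¹ with hc
  have hc0 : 0 < c := inv_pos.2 hI
  have hv : ∀ p v, fderiv ℝ (fun p => (c : ℂ) * F p) p v = c * fderiv ℝ F p v := by
    intro p v
    rw [fderiv_const_mul (hF.differentiable (by simp) p)]
    simp
  have hX : dX (fun p => (c : ℂ) * F p) = fun p => (c : ℂ) * dX F p := by
    ext p; exact hv p _
  have hB : dbar (fun p => (c : ℂ) * F p) = fun p => (c : ℂ) * dbar F p := by
    ext p
    simp only [dbar, dX, dY, hv]
    ring
  refine reduction1 (fun p => (c : ℂ) * F p) (contDiff_const.mul hF) ?_ ?_ ?_ ?_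
  · intro p
    rw [Complex.re_ofReal_mul]
    exact mul_pos hc0 (hpos p)
  · simp only [Complex.re_ofReal_mul]
    rw [integral_const_mul, hc, inv_mul_cancel₀ hI.ne']
  · rw [hB]
    exact hd.const_mul _
  · rw [hX]
    intro H
    apply hx
    have := H.const_mul ((c : ℂ)⁻¹)
    refine this.congr (Filter.Eventually.of_forall fun p => ?_)
    have : (c : ℂ) ≠ 0 := by exact_mod_cast hc0.ne'
    simp only []
    field_simp

open Polynomial in
/-- weighted Rudin-Shapiro polynomials -/
def RS (a : ℝ) : ℕ → ℂ[X] × ℂ[X]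
  | 0 => (0, 1)
  | k + 1 => ((RS a k).1 + C (a : ℂ) * (X ^ (2 ^ k) * (RS a k).2),
      C (a : ℂ) * (RS a k).1 - X ^ (2 ^ k) * (RS a k).2)

open Polynomial in
lemma RS_norm (a : ℝ) (k : ℕ) (z : ℂ) (hz : ‖z‖ = 1) :
    ‖(RS a k).1.eval z‖ ^ 2 + ‖(RS a k).2.eval z‖ ^ 2 = (1 + a ^ 2) ^ k := by
  induction k with
  | zero => simp [RS]
  | succ k ih =>
    have key : ∀ p q : ℂ, ‖p + a * q‖ ^ 2 + ‖a * p - q‖ ^ 2 = (1 + a ^ 2) * (‖p‖ ^ 2 + ‖q‖ ^ 2) := by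
      intro p q
      simp only [← Complex.normSq_eq_norm_sq, Complex.normSq_apply]
      simp
      ring
    simp only [RS, eval_add, eval_sub, eval_mul, eval_C, eval_pow, eval_X]
    rw [key, pow_succ (1 + a ^ 2) k, ← ih]
    simp [hz]
    ring

open Polynomial in
lemma RS_coeff_zero (a : ℝ) (k : ℕ) : (∀ j, 2 ^ k ≤ j → (RS a k).1.coeff j = 0) ∧
    (∀ j, 2 ^ k ≤ j → (RS a k).2.coeff j = 0) := by
  induction k with
  | zero =>
    refine ⟨fun j hj => by simp [RS], fun j hj => ?_⟩
    have : j ≠ 0 := by simp at hj; omega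
    simp [RS, coeff_one, this]
  | succ k ih =>
    have h : ∀ j, 2 ^ (k + 1) ≤ j → (RS a k).1.coeff j = 0 ∧
        (X ^ (2 ^ k) * (RS a k).2).coeff j = 0 := by
      intro j hj
      rw [pow_succ] at hj
      refine ⟨ih.1 j (by omega), ?_⟩
      rw [coeff_X_pow_mul', if_pos (by omega)]
      exact ih.2 _ (by omega)
    constructor <;> intro j hj <;> simp [RS, -coeff_X_pow_mul, (h j hj).1, (h j hj).2]

open Polynomial in
lemma RS_top (a : ℝ) (k : ℕ) : ‖(RS a k).2.coeff (2 ^ k - 1)‖ = 1 := by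
  induction k with
  | zero => simp [RS]
  | succ k ih =>
    have h1 : 1 ≤ 2 ^ k := Nat.one_le_two_pow
    have e : 2 ^ (k + 1) - 1 = (2 ^ k - 1) + 2 ^ k := by rw [pow_succ]; omega
    rw [e]
    simp only [RS, coeff_sub, coeff_C_mul, coeff_X_pow_mul]
    rw [(RS_coeff_zero a k).1 _ (by omega)]
    simp [ih]

open Polynomial in
lemma RS_coeff (a : ℝ) (ha : 0 ≤ a) (n k : ℕ) (h : k < n) :
    ‖(RS a n).1.coeff (2 ^ (k + 1) - 1)‖ = a := by
  induction n with
  | zero => omega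
  | succ n ih =>
    have h1 : 1 ≤ 2 ^ n := Nat.one_le_two_pow
    rcases Nat.lt_succ_iff_lt_or_eq.1 h with h | h
    · have : 2 ^ (k + 1) ≤ 2 ^ n := Nat.pow_le_pow_right (by norm_num) h
      have h2 : 1 ≤ 2 ^ (k + 1) := Nat.one_le_two_pow
      simp only [RS, coeff_add, coeff_C_mul]
      rw [coeff_X_pow_mul', if_neg (by omega)]
      simpa using ih h
    · subst h
      have e : 2 ^ (k + 1) - 1 = (2 ^ k - 1) + 2 ^ k := by rw [pow_succ]; omega
      rw [e]
      simp only [RS, coeff_add, coeff_C_mul, coeff_X_pow_mul]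
      rw [(RS_coeff_zero a k).1 _ (by omega)]
      simp [RS_top, abs_of_nonneg ha]

open Polynomial in
/-- the polynomials we use: bounded by 2 on the disk, with many coefficients of size `1/√n` -/
lemma exists_poly (n : ℕ) (hn : 0 < n) : ∃ P : ℂ[X], (∀ z : ℂ, ‖z‖ ≤ 1 → ‖P.eval z‖ ≤ 2) ∧
    ∀ k < n, ‖P.coeff (2 ^ (k + 1) - 1)‖ = 1 / √n := by
  have hn' : (0:ℝ) < n := by exact_mod_cast hn
  set a : ℝ := 1 / √n with ha
  have ha0 : 0 ≤ a := by positivity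
  have ha2 : a ^ 2 = 1 / n := by rw [ha, div_pow, Real.sq_sqrt hn'.le]; simp
  refine ⟨(RS a n).1, ?_, fun k hk => RS_coeff a ha0 n k hk⟩
  intro z hz
  have hb : ∀ w : ℂ, ‖w‖ = 1 → ‖(RS a n).1.eval w‖ ≤ 2 := by
    intro w hw
    have h1 := RS_norm a n w hw
    have h2 : (1 + a ^ 2) ^ n ≤ Real.exp 1 := by
      calc (1 + a ^ 2) ^ n ≤ (Real.exp (a ^ 2)) ^ n := by
            gcongr
            rw [add_comm]
            exact Real.add_one_le_exp _
        _ = Real.exp 1 := by rw [← Real.exp_nat_mul, ha2]; congr 1; field_simp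
    have h3 := Real.exp_one_lt_d9
    refine abs_le_of_sq_le_sq' (b := 2) ?_ (by norm_num) |>.2
    nlinarith [sq_nonneg ‖(RS a n).2.eval w‖]
  have hz' : z ∈ closure (Metric.ball (0:ℂ) 1) := by
    rw [closure_ball _ one_ne_zero]; simpa using hz
  refine Complex.norm_le_of_forall_mem_frontier_norm_le Metric.isBounded_ball
    (f := fun z => (RS a n).1.eval z) (Polynomial.differentiable _).diffContOnCl ?_ hz'
  intro w hw
  rw [frontier_ball _ one_ne_zero] at hw
  exact hb w (by simpa using hw)

/-- the exponential map `e^{2π(x+iy)}` -/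
def wexp (x y : ℝ) : ℂ := Complex.exp (2 * π * (x + y * Complex.I))

lemma wexp_norm (x y : ℝ) : ‖wexp x y‖ = Real.exp (2 * π * x) := by
  rw [wexp, Complex.norm_exp]; congr 1; simp

lemma wexp_cont (x : ℝ) : Continuous (wexp x) := by
  unfold wexp; fun_prop

lemma int_exp (j : ℤ) (c : ℝ) : ∫ y in c..(c + 1), Complex.exp (2 * π * j * Complex.I * y) =
    if j = 0 then 1 else 0 := by
  split_ifs with h
  · simp [h]
  · have hc : (2 * π * j * Complex.I : ℂ) ≠ 0 := by
      simp [h, Real.pi_ne_zero]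
    rw [integral_exp_mul_complex hc]
    have : Complex.exp (2 * π * j * Complex.I * ((c + 1 : ℝ) : ℂ)) =
        Complex.exp (2 * π * j * Complex.I * c) := by
      rw [Complex.exp_eq_exp_iff_exists_int]
      exact ⟨j, by push_cast; ring⟩
    rw [this]; simp

open Polynomial in
lemma fourier_poly (Q : ℂ[X]) (m : ℕ) (x c : ℝ) :
    ∫ y in c..(c + 1), Q.eval (wexp x y) * Complex.exp (- (2 * π * m * Complex.I * y)) =
      Q.coeff m * Complex.exp (2 * π * m * x) := by
  induction Q using Polynomial.induction_on' with
  | add p q hp hq =>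
    simp only [eval_add, add_mul, coeff_add]
    rw [intervalIntegral.integral_add, hp, hq]
    · apply Continuous.intervalIntegrable
      have := wexp_cont x
      have := p.continuous.comp this
      simp only [Function.comp_def] at this
      fun_prop
    · apply Continuous.intervalIntegrable
      have := wexp_cont x
      have := q.continuous.comp this
      simp only [Function.comp_def] at this
      fun_prop
  | monomial j a =>
    have e : ∀ y : ℝ, (monomial j a).eval (wexp x y) * Complex.exp (- (2 * π * m * Complex.I * y)) =
      (a * Complex.exp (2 * π * j * x)) *
        Complex.exp (2 * π * ((j - m : ℤ) : ℂ) * Complex.I * y) := by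
      intro y
      rw [eval_monomial, wexp, ← Complex.exp_nat_mul, mul_assoc a, mul_assoc a, ← Complex.exp_add,
        ← Complex.exp_add]
      congr 2
      push_cast
      ring
    simp only [e]
    rw [intervalIntegral.integral_const_mul, int_exp, coeff_monomial]
    by_cases h : j = m
    · subst h; simp
    · have : (j : ℤ) - m ≠ 0 := by omega
      simp [h, this]

open Polynomial in
lemma line_lower (P : ℂ[X]) (m : ℕ) (x c : ℝ) :
    ENNReal.ofReal (m * ‖P.coeff m‖ * Real.exp (2 * π * m * x)) ≤
      ∫⁻ y in Set.Ioo c (c + 1), ‖wexp x y * (derivative P).eval (wexp x y)‖ₑ := by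
  have hco : (X * derivative P).coeff m = m * P.coeff m := by
    cases m with
    | zero => simp
    | succ m => rw [coeff_X_mul, coeff_derivative]; push_cast; ring
  have h := fourier_poly (X * derivative P) m x c
  rw [intervalIntegral.integral_of_le (by linarith), integral_Ioc_eq_integral_Ioo, hco] at h
  have h2 := enorm_integral_le_lintegral_enorm (μ := volume.restrict (Set.Ioo c (c + 1)))
    (fun y : ℝ => (X * derivative P).eval (wexp x y) * Complex.exp (- (2 * π * m * Complex.I * y)))
  rw [h] at h2
  have e1 : ‖(m * P.coeff m * Complex.exp (2 * π * m * x) : ℂ)‖ₑ =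
      ENNReal.ofReal (m * ‖P.coeff m‖ * Real.exp (2 * π * m * x)) := by
    rw [← ofReal_norm, norm_mul, norm_mul, Complex.norm_exp]
    simp
  rw [e1] at h2
  refine h2.trans (le_of_eq ?_)
  congr 1
  ext y
  rw [enorm_mul, eval_mul, eval_X]
  have : ‖Complex.exp (- (2 * π * m * Complex.I * y))‖ₑ = 1 := by
    rw [← ofReal_norm, Complex.norm_exp]
    simp
  rw [this, mul_one]

open Polynomial in
lemma strip_lower (n : ℕ) (P : ℂ[X]) (a : ℝ) (ha : 0 ≤ a)
    (hP : ∀ k < n, ‖P.coeff (2 ^ (k + 1) - 1)‖ = a) (c : ℝ) (k : ℕ) (hk : k ≤ n) :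
    ENNReal.ofReal (k * (a * Real.exp (-(4 * π)) / 2)) ≤
      ∫⁻ x in Set.Ico (-1 : ℝ) (-(2 ^ k)⁻¹), ∫⁻ y in Set.Ioo c (c + 1),
        ‖wexp x y * (derivative P).eval (wexp x y)‖ₑ := by
  induction k with
  | zero => simp
  | succ k ih =>
    have h1 : ((2:ℝ) ^ (k + 1))⁻¹ = (2 ^ k)⁻¹ / 2 := by rw [pow_succ]; field_simp
    have hp : (0:ℝ) < (2 ^ k)⁻¹ := by positivity
    have hle : ((2:ℝ) ^ k)⁻¹ ≤ 1 := inv_le_one_of_one_le₀ (one_le_pow₀ (by norm_num))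
    have hU : Set.Ico (-1 : ℝ) (-(2 ^ (k + 1))⁻¹) =
        Set.Ico (-1 : ℝ) (-(2 ^ k)⁻¹) ∪ Set.Ico (-(2 ^ k)⁻¹ : ℝ) (-(2 ^ (k + 1))⁻¹) := by
      rw [Set.Ico_union_Ico_eq_Ico] <;> linarith
    rw [hU, lintegral_union measurableSet_Ico (Set.Ico_disjoint_Ico_same)]
    have e : ((k + 1 : ℕ) : ℝ) * (a * Real.exp (-(4 * π)) / 2) =
        k * (a * Real.exp (-(4 * π)) / 2) + (a * Real.exp (-(4 * π)) / 2) := by push_cast; ring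
    rw [e, ENNReal.ofReal_add (by positivity) (by positivity)]
    refine add_le_add (ih (by omega)) ?_
    have hpt : ∀ x ∈ Set.Ico (-(2 ^ k)⁻¹ : ℝ) (-(2 ^ (k + 1))⁻¹),
        ENNReal.ofReal (2 ^ k * a * Real.exp (-(4 * π))) ≤ ∫⁻ y in Set.Ioo c (c + 1),
        ‖wexp x y * (derivative P).eval (wexp x y)‖ₑ := by
      intro x hx
      refine le_trans ?_ (line_lower P (2 ^ (k + 1) - 1) x c)
      rw [hP k (by omega)]
      have c1 : ((2 ^ (k + 1) - 1 : ℕ) : ℝ) = 2 * 2 ^ k - 1 := by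
        rw [Nat.cast_sub Nat.one_le_two_pow]; push_cast; ring
      have c2 : (1:ℝ) ≤ 2 ^ k := one_le_pow₀ (by norm_num)
      rw [c1]
      apply ENNReal.ofReal_le_ofReal
      have hx1 := hx.1
      have c3 : (2:ℝ) ^ k * (-x) ≤ 1 := by
        have : -x ≤ (2 ^ k)⁻¹ := by linarith
        calc (2:ℝ) ^ k * (-x) ≤ 2 ^ k * (2 ^ k)⁻¹ := by gcongr
          _ = 1 := by field_simp
      have hx0 : x < 0 := by
        have := hx.2
        rw [h1] at this
        linarith
      have c4 : (0:ℝ) ≤ 2 * 2 ^ k - 1 := by linarith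
      gcongr
      · linarith
      · nlinarith [Real.pi_pos, mul_nonneg Real.pi_pos.le (sub_nonneg.2 c3), mul_pos Real.pi_pos (neg_pos.2 hx0)]
    calc ENNReal.ofReal (a * Real.exp (-(4 * π)) / 2)
        = ENNReal.ofReal (2 ^ k * a * Real.exp (-(4 * π))) *
          volume (Set.Ico (-(2 ^ k)⁻¹ : ℝ) (-(2 ^ (k + 1))⁻¹)) := by
          rw [Real.volume_Ico, ← ENNReal.ofReal_mul (by positivity), h1]
          congr 1
          field_simp
          ring
      _ = ∫⁻ x in Set.Ico (-(2 ^ k)⁻¹ : ℝ) (-(2 ^ (k + 1))⁻¹),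
          ENNReal.ofReal (2 ^ k * a * Real.exp (-(4 * π))) := by rw [setLIntegral_const]
      _ ≤ _ := setLIntegral_mono' measurableSet_Ico hpt

lemma st_contDiff : ContDiff ℝ (⊤ : ℕ∞) Real.smoothTransition := Real.smoothTransition.contDiff

lemma st_hasDeriv (x : ℝ) :
    HasDerivAt Real.smoothTransition (deriv Real.smoothTransition x) x :=
  (st_contDiff.differentiable (by simp) x).hasDerivAt

lemma st_deriv_zero (x : ℝ) (hx : x < 0 ∨ 1 < x) : deriv Real.smoothTransition x = 0 := by
  rcases hx with hx | hx
  · have : Real.smoothTransition =ᶠ[nhds x] fun _ => 0 := by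
      filter_upwards [Iio_mem_nhds hx] with y hy
      exact Real.smoothTransition.zero_of_nonpos (le_of_lt hy)
    rw [this.deriv_eq]; simp
  · have : Real.smoothTransition =ᶠ[nhds x] fun _ => 1 := by
      filter_upwards [Ioi_mem_nhds hx] with y hy
      exact Real.smoothTransition.one_of_one_le (le_of_lt hy)
    rw [this.deriv_eq]; simp

lemma st_deriv_bound : ∃ D : ℝ, 0 ≤ D ∧ ∀ x, |deriv Real.smoothTransition x| ≤ D := by
  have hc : Continuous (deriv Real.smoothTransition) := st_contDiff.continuous_deriv (by simp)
  obtain ⟨D, hD⟩ := isCompact_Icc.exists_bound_of_continuousOn (s := Set.Icc (0:ℝ) 1) hc.continuousOn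
  refine ⟨max D 0, le_max_right _ _, fun x => ?_⟩
  by_cases hx : x ∈ Set.Icc (0:ℝ) 1
  · exact (hD x hx).trans (le_max_left _ _)
  · rw [st_deriv_zero x]
    · simp
    · simp only [Set.mem_Icc, not_and_or, not_le] at hx
      exact hx

lemma cut_x (D : ℝ) (hD : ∀ x, |deriv Real.smoothTransition x| ≤ D) (δ : ℝ) (hδ : 0 < δ) :
    ∃ α α' : ℝ → ℝ, ContDiff ℝ (⊤ : ℕ∞) α ∧
    (∀ x, HasDerivAt α (α' x) x) ∧ (∀ x, 0 ≤ α x ∧ α x ≤ 1) ∧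
    (∀ x, -1 ≤ x → x ≤ -δ → α x = 1) ∧ (∀ x, x ∉ Set.Icc (-2:ℝ) 0 → α x = 0 ∧ α' x = 0) ∧
    (∀ x, |α' x| ≤ D / δ + D) ∧ (∀ x, x ∉ Set.Icc (-δ) 0 → |α' x| ≤ D) := by
  set s := Real.smoothTransition with hs
  have s0 : ∀ x, 0 ≤ s x := Real.smoothTransition.nonneg
  have s1 : ∀ x, s x ≤ 1 := Real.smoothTransition.le_one
  have sa : ∀ x, |s x| ≤ 1 := fun x => abs_le.2 ⟨by linarith [s0 x], s1 x⟩
  have hD0 : 0 ≤ D := (abs_nonneg _).trans (hD 0)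
  have hA : ∀ x, |deriv s (-x / δ) * (-1 / δ)| ≤ D / δ := by
    intro x
    rw [abs_mul, abs_div, abs_neg, abs_one, abs_of_pos hδ, mul_one_div]
    gcongr
    exact hD _
  refine ⟨fun x => s (-x / δ) * s (x + 2), fun x => (deriv s (-x / δ) * (-1 / δ)) * s (x + 2) +
    s (-x / δ) * (deriv s (x + 2)), ?_, ?_, ?_, ?_, ?_, ?_, ?_⟩
  · exact (st_contDiff.comp (contDiff_id.neg.div_const δ)).mul
      (st_contDiff.comp (contDiff_id.add contDiff_const))
  · intro x
    have h1 : HasDerivAt (fun x : ℝ => -x / δ) (-1 / δ) x := (hasDerivAt_id x).neg.div_const δ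
    have h2 := (st_hasDeriv (-x / δ)).comp x h1
    have h3 : HasDerivAt (fun x : ℝ => s (x + 2)) (deriv s (x + 2)) x :=
      (st_hasDeriv (x + 2)).comp_add_const x 2
    exact h2.mul h3
  · intro x
    exact ⟨mul_nonneg (s0 _) (s0 _), mul_le_one₀ (s1 _) (s0 _) (s1 _)⟩
  · intro x h1 h2
    have e1 : s (-x / δ) = 1 := Real.smoothTransition.one_of_one_le (by
      rw [le_div_iff₀ hδ]; linarith)
    have e2 : s (x + 2) = 1 := Real.smoothTransition.one_of_one_le (by linarith)
    simp only [e1, e2, mul_one]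
  · intro x hx
    simp only [Set.mem_Icc, not_and_or, not_le] at hx
    rcases hx with hx | hx
    · have e1 : s (x + 2) = 0 := Real.smoothTransition.zero_of_nonpos (by linarith)
      have e2 : deriv s (x + 2) = 0 := st_deriv_zero _ (Or.inl (by linarith))
      simp [e1, e2]
    · have e1 : s (-x / δ) = 0 := Real.smoothTransition.zero_of_nonpos
        (div_nonpos_of_nonpos_of_nonneg (by linarith) hδ.le)
      have e2 : deriv s (-x / δ) = 0 := st_deriv_zero _ (Or.inl
        (div_neg_of_neg_of_pos (by linarith) hδ))
      simp [e1, e2]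
  · intro x
    refine (abs_add_le _ _).trans (add_le_add ?_ ?_)
    · rw [abs_mul]
      exact (mul_le_of_le_one_right (abs_nonneg _) (sa _)).trans (hA x)
    · rw [abs_mul]
      exact (mul_le_of_le_one_left (abs_nonneg _) (sa _)).trans (hD _)
  · intro x hx
    have e2 : deriv s (-x / δ) = 0 := by
      apply st_deriv_zero
      simp only [Set.mem_Icc, not_and_or, not_le] at hx
      rcases hx with hx | hx
      · right; rw [lt_div_iff₀ hδ]; linarith
      · left; exact div_neg_of_neg_of_pos (by linarith) hδ
    simp only [e2, zero_mul, zero_add]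
    rw [abs_mul]
    exact (mul_le_of_le_one_left (abs_nonneg _) (sa _)).trans (hD _)

lemma cut_y (D : ℝ) (hD : ∀ x, |deriv Real.smoothTransition x| ≤ D) (c : ℝ) :
    ∃ β β' : ℝ → ℝ, ContDiff ℝ (⊤ : ℕ∞) β ∧
    (∀ x, HasDerivAt β (β' x) x) ∧ (∀ x, 0 ≤ β x ∧ β x ≤ 1) ∧
    (∀ x, c + 1 ≤ x → x ≤ c + 2 → β x = 1) ∧
    (∀ x, x ∉ Set.Icc c (c + 3) → β x = 0 ∧ β' x = 0) ∧
    (∀ x, |β' x| ≤ 2 * D) := by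
  set s := Real.smoothTransition with hs
  have s0 : ∀ x, 0 ≤ s x := Real.smoothTransition.nonneg
  have s1 : ∀ x, s x ≤ 1 := Real.smoothTransition.le_one
  have sa : ∀ x, |s x| ≤ 1 := fun x => abs_le.2 ⟨by linarith [s0 x], s1 x⟩
  refine ⟨fun x => s (x - c) * s (c + 3 - x), fun x => deriv s (x - c) * s (c + 3 - x) +
    s (x - c) * (-deriv s (c + 3 - x)), ?_, ?_, ?_, ?_, ?_, ?_⟩
  · exact (st_contDiff.comp (contDiff_id.sub contDiff_const)).mul
      (st_contDiff.comp (contDiff_const.sub contDiff_id))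
  · intro x
    exact ((st_hasDeriv (x - c)).comp_sub_const x c).mul
      ((st_hasDeriv (c + 3 - x)).comp_const_sub (c + 3) x)
  · intro x
    exact ⟨mul_nonneg (s0 _) (s0 _), mul_le_one₀ (s1 _) (s0 _) (s1 _)⟩
  · intro x h1 h2
    have e1 : s (x - c) = 1 := Real.smoothTransition.one_of_one_le (by linarith)
    have e2 : s (c + 3 - x) = 1 := Real.smoothTransition.one_of_one_le (by linarith)
    simp only [e1, e2, mul_one]
  · intro x hx
    simp only [Set.mem_Icc, not_and_or, not_le] at hx
    rcases hx with hx | hx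
    · have e1 : s (x - c) = 0 := Real.smoothTransition.zero_of_nonpos (by linarith)
      have e2 : deriv s (x - c) = 0 := st_deriv_zero _ (Or.inl (by linarith))
      simp [e1, e2]
    · have e1 : s (c + 3 - x) = 0 := Real.smoothTransition.zero_of_nonpos (by linarith)
      have e2 : deriv s (c + 3 - x) = 0 := st_deriv_zero _ (Or.inl (by linarith))
      simp [e1, e2]
  · intro x
    rw [two_mul]
    refine (abs_add_le _ _).trans (add_le_add ?_ ?_)
    · rw [abs_mul]
      exact (mul_le_of_le_one_right (abs_nonneg _) (sa _)).trans (hD _)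
    · rw [abs_mul, abs_neg]
      exact (mul_le_of_le_one_left (abs_nonneg _) (sa _)).trans (hD _)

lemma dX_eq {F : ℝ × ℝ → ℂ} (hF : ContDiff ℝ (⊤ : ℕ∞) F) (p : ℝ × ℝ) (c : ℂ)
    (h : HasDerivAt (fun x : ℝ => F (x, p.2)) c p.1) : dX F p = c := by
  have h1 : HasFDerivAt F (fderiv ℝ F p) (p.1, p.2) := (hF.differentiable (by simp) p).hasFDerivAt
  have h2 : HasDerivAt (fun x : ℝ => (x, p.2)) ((1 : ℝ), (0 : ℝ)) p.1 :=
    (hasDerivAt_id p.1).prodMk (hasDerivAt_const _ _)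
  exact (h1.comp_hasDerivAt p.1 h2).unique h

lemma dY_eq {F : ℝ × ℝ → ℂ} (hF : ContDiff ℝ (⊤ : ℕ∞) F) (p : ℝ × ℝ) (c : ℂ)
    (h : HasDerivAt (fun y : ℝ => F (p.1, y)) c p.2) : dY F p = c := by
  have h1 : HasFDerivAt F (fderiv ℝ F p) (p.1, p.2) := (hF.differentiable (by simp) p).hasFDerivAt
  have h2 : HasDerivAt (fun y : ℝ => (p.1, y)) ((0 : ℝ), (1 : ℝ)) p.2 :=
    (hasDerivAt_const _ _).prodMk (hasDerivAt_id p.2)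
  exact (h1.comp_hasDerivAt p.2 h2).unique h

lemma wexp_smooth : ContDiff ℝ (⊤ : ℕ∞) (fun p : ℝ × ℝ => wexp p.1 p.2) := by
  have h1 : ContDiff ℝ (⊤ : ℕ∞) (fun p : ℝ × ℝ => (p.1 : ℂ)) :=
    Complex.ofRealCLM.contDiff.comp contDiff_fst
  have h2 : ContDiff ℝ (⊤ : ℕ∞) (fun p : ℝ × ℝ => (p.2 : ℂ)) :=
    Complex.ofRealCLM.contDiff.comp contDiff_snd
  exact (contDiff_const.mul (h1.add (h2.mul contDiff_const))).cexp

lemma wexp_dx (x y : ℝ) : HasDerivAt (fun x : ℝ => wexp x y) (2 * π * wexp x y) x := by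
  have h : HasDerivAt (fun x : ℝ => (2 * π * (x + y * Complex.I) : ℂ)) (2 * π * 1) x :=
    (((hasDerivAt_id x).ofReal_comp).add_const _).const_mul _
  refine h.cexp.congr_deriv ?_
  rw [wexp]; ring

lemma wexp_dy (x y : ℝ) : HasDerivAt (fun y : ℝ => wexp x y) (2 * π * Complex.I * wexp x y) y := by
  have h : HasDerivAt (fun y : ℝ => (2 * π * (x + y * Complex.I) : ℂ))
      (2 * π * (1 * Complex.I)) y :=
    ((((hasDerivAt_id y).ofReal_comp).mul_const _).const_add _).const_mul _
  refine h.cexp.congr_deriv ?_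
  rw [wexp]; ring

open Polynomial in
lemma block (D : ℝ) (hD : ∀ x, |deriv Real.smoothTransition x| ≤ D) (c M : ℝ) :
    ∃ v : ℝ × ℝ → ℂ, ContDiff ℝ (⊤ : ℕ∞) v ∧ (∀ p, 0 ≤ (v p).re) ∧
      (∀ p, p.2 ∉ Set.Icc c (c + 3) → v p = 0) ∧
      ∫⁻ p, ‖v p‖ₑ ≤ ENNReal.ofReal (24 + 84 * D) ∧
      ∫⁻ p, ‖dbar v p‖ₑ ≤ ENNReal.ofReal (24 + 84 * D) ∧
      ENNReal.ofReal M ≤ ∫⁻ p in Set.univ ×ˢ Set.Ioo c (c + 3), ‖dX v p‖ₑ := by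
  have hD0 : 0 ≤ D := (abs_nonneg _).trans (hD 0)
  obtain ⟨n, hn0, hn⟩ : ∃ n : ℕ, 0 < n ∧ M ≤ √n * (Real.exp (-(4 * π)) / 2) := by
    have hq : 0 < Real.exp (-(4 * π)) / 2 := by positivity
    obtain ⟨n, hn⟩ := exists_nat_ge ((M / (Real.exp (-(4 * π)) / 2)) ^ 2)
    refine ⟨n + 1, by omega, ?_⟩
    rw [← div_le_iff₀ hq]
    apply Real.le_sqrt_of_sq_le
    push_cast
    linarith
  have hn' : (0:ℝ) < n := by exact_mod_cast hn0
  obtain ⟨P, hP2, hPc⟩ := exists_poly n hn0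
  set δ : ℝ := (2 ^ n)⁻¹ with hδd
  have hδ : 0 < δ := by positivity
  have hδ1 : δ ≤ 1 := inv_le_one_of_one_le₀ (one_le_pow₀ (by norm_num))
  obtain ⟨α, α', hα, hα', hα01, hα1, hα0, hαb, hαb'⟩ := cut_x D hD δ hδ
  obtain ⟨β, β', hβ, hβ', hβ01, hβ1, hβ0, hβb⟩ := cut_y D hD c
  set H : ℝ × ℝ → ℂ := fun p => 2 + P.eval (wexp p.1 p.2) with hH
  have Hsm : ContDiff ℝ (⊤ : ℕ∞) H :=
    contDiff_const.add (((P.differentiable.contDiff (n := ((⊤ : ℕ∞) : WithTop ℕ∞))).restrict_scalars ℝ).comp wexp_smooth)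
  set v : ℝ × ℝ → ℂ := fun p => (α p.1 : ℂ) * (β p.2 : ℂ) * H p with hv
  have vsm : ContDiff ℝ (⊤ : ℕ∞) v := by
    have h1 : ContDiff ℝ (⊤ : ℕ∞) (fun p : ℝ × ℝ => (α p.1 : ℂ)) :=
      Complex.ofRealCLM.contDiff.comp (hα.comp contDiff_fst)
    have h2 : ContDiff ℝ (⊤ : ℕ∞) (fun p : ℝ × ℝ => (β p.2 : ℂ)) :=
      Complex.ofRealCLM.contDiff.comp (hβ.comp contDiff_snd)
    exact (h1.mul h2).mul Hsm
  have hPw : ∀ p : ℝ × ℝ, p.1 ≤ 0 → ‖P.eval (wexp p.1 p.2)‖ ≤ 2 := by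
    intro p hp
    apply hP2
    rw [wexp_norm]
    exact Real.exp_le_one_iff.2 (mul_nonpos_of_nonneg_of_nonpos (by positivity) hp)
  have hH4 : ∀ p : ℝ × ℝ, p.1 ≤ 0 → ‖H p‖ ≤ 4 := by
    intro p hp
    refine (norm_add_le _ _).trans ?_
    have := hPw p hp
    simp only [Complex.norm_ofNat]
    linarith
  -- derivatives
  have vx : ∀ p, dX v p = (α' p.1 : ℂ) * (β p.2 : ℂ) * H p +
      (α p.1 : ℂ) * (β p.2 : ℂ) * (2 * π * (wexp p.1 p.2 * (derivative P).eval (wexp p.1 p.2))) := by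
    intro p
    apply dX_eq vsm
    have h1 := (((hα' p.1).ofReal_comp.mul_const (β p.2 : ℂ)).mul
      (((P.hasDerivAt (wexp p.1 p.2)).comp p.1 (wexp_dx p.1 p.2)).const_add 2))
    refine h1.congr_deriv ?_
    simp only [hH, Function.comp_apply]
    ring
  have vy : ∀ p, dY v p = (α p.1 : ℂ) * (β' p.2 : ℂ) * H p +
      (α p.1 : ℂ) * (β p.2 : ℂ) * (2 * π * Complex.I * (wexp p.1 p.2 * (derivative P).eval (wexp p.1 p.2))) := by
    intro p
    apply dY_eq vsm
    have h1 := (((hβ' p.2).ofReal_comp.const_mul (α p.1 : ℂ)).mul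
      (((P.hasDerivAt (wexp p.1 p.2)).comp p.2 (wexp_dy p.1 p.2)).const_add 2))
    refine h1.congr_deriv ?_
    simp only [hH, Function.comp_apply]
    ring
  have vd : ∀ p, dbar v p = ((α' p.1 : ℂ) * (β p.2 : ℂ) + Complex.I * ((α p.1 : ℂ) * (β' p.2 : ℂ))) * H p := by
    intro p
    rw [dbar, vx, vy]
    linear_combination (α p.1 : ℂ) * (β p.2 : ℂ) * (2 * π * (wexp p.1 p.2 * (derivative P).eval (wexp p.1 p.2))) * Complex.I_mul_I
  set B : Set (ℝ × ℝ) := Set.Icc (-2 : ℝ) 0 ×ˢ Set.Icc c (c + 3) with hB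
  set S : Set (ℝ × ℝ) := Set.Icc (-δ) 0 ×ˢ Set.Icc c (c + 3) with hS
  have mB : MeasurableSet B := measurableSet_Icc.prod measurableSet_Icc
  have mS : MeasurableSet S := measurableSet_Icc.prod measurableSet_Icc
  have volB : volume B = ENNReal.ofReal 6 := by
    rw [hB, Measure.volume_eq_prod, Measure.prod_prod, Real.volume_Icc, Real.volume_Icc,
      ← ENNReal.ofReal_mul (by norm_num)]
    congr 1; ring
  have volS : volume S = ENNReal.ofReal (δ * 3) := by
    rw [hS, Measure.volume_eq_prod, Measure.prod_prod, Real.volume_Icc, Real.volume_Icc,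
      ← ENNReal.ofReal_mul (by linarith)]
    congr 1; ring
  refine ⟨v, vsm, ?_, ?_, ?_, ?_, ?_⟩
  · intro p
    by_cases hp : p.1 ≤ 0
    · have e : v p = ((α p.1 * β p.2 : ℝ) : ℂ) * H p := by simp [hv]
      rw [e, Complex.re_ofReal_mul]
      refine mul_nonneg (mul_nonneg (hα01 _).1 (hβ01 _).1) ?_
      have h1 := (abs_le.1 ((Complex.abs_re_le_norm _).trans (hPw p hp))).1
      simp only [hH, Complex.add_re, Complex.re_ofNat]
      linarith
    · have : α p.1 = 0 := (hα0 p.1 (fun h => hp h.2)).1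
      simp [hv, this]
  · intro p hp
    simp [hv, (hβ0 p.2 hp).1]
  · calc ∫⁻ p, ‖v p‖ₑ ≤ ∫⁻ p, B.indicator (fun _ => ENNReal.ofReal 4) p := by
          apply lintegral_mono
          intro p
          simp only []
          by_cases hp : p ∈ B
          · rw [Set.indicator_of_mem hp, ← ofReal_norm]
            apply ENNReal.ofReal_le_ofReal
            simp only [hv, norm_mul, Complex.norm_real, Real.norm_eq_abs, abs_of_nonneg (hα01 _).1,
              abs_of_nonneg (hβ01 _).1]
            have := hH4 p hp.1.2
            have h2 := mul_le_one₀ (hα01 p.1).2 (hβ01 p.2).1 (hβ01 p.2).2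
            exact (mul_le_of_le_one_left (norm_nonneg _) h2).trans this
          · rw [Set.indicator_of_notMem hp]
            have : v p = 0 := by
              rw [hB, Set.mem_prod, not_and_or] at hp
              rcases hp with hp | hp
              · simp [hv, (hα0 _ hp).1]
              · simp [hv, (hβ0 _ hp).1]
            simp [this]
      _ = ENNReal.ofReal 24 := by
          rw [lintegral_indicator_const mB, volB, ← ENNReal.ofReal_mul (by norm_num)]
          norm_num
      _ ≤ _ := ENNReal.ofReal_le_ofReal (by linarith)
  · calc ∫⁻ p, ‖dbar v p‖ₑ ≤ ∫⁻ p, (B.indicator (fun _ => ENNReal.ofReal (12 * D)) p +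
          S.indicator (fun _ => ENNReal.ofReal (4 * D / δ)) p) := by
          apply lintegral_mono
          intro p
          by_cases hp : p ∈ B
          · have h4 := hH4 p hp.1.2
            have hn : ‖dbar v p‖ ≤ (|α' p.1| + 2 * D) * 4 := by
              rw [vd, norm_mul]
              refine mul_le_mul ((norm_add_le _ _).trans ?_) h4 (norm_nonneg _) (by positivity)
              simp only [norm_mul, Complex.norm_real, Real.norm_eq_abs, Complex.norm_I, one_mul,
                abs_of_nonneg (hα01 _).1, abs_of_nonneg (hβ01 _).1]
              exact add_le_add (mul_le_of_le_one_right (abs_nonneg _) (hβ01 _).2)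
                ((mul_le_of_le_one_left (abs_nonneg _) (hα01 _).2).trans (hβb _))
            simp only []
            rw [Set.indicator_of_mem hp, ← ofReal_norm]
            by_cases hq : p ∈ S
            · rw [Set.indicator_of_mem hq, ← ENNReal.ofReal_add (by positivity) (by positivity)]
              apply ENNReal.ofReal_le_ofReal
              have := hαb p.1
              have e : 4 * D / δ = 4 * (D / δ) := by ring
              rw [e]
              linarith
            · rw [Set.indicator_of_notMem hq, add_zero]
              apply ENNReal.ofReal_le_ofReal
              have := hαb' p.1 (fun h => hq ⟨h, hp.2⟩)
              linarith
          · have : dbar v p = 0 := by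
              rw [hB, Set.mem_prod, not_and_or] at hp
              rw [vd]
              rcases hp with hp | hp
              · simp [(hα0 _ hp).1, (hα0 _ hp).2]
              · simp [(hβ0 _ hp).1, (hβ0 _ hp).2]
            simp [this]
      _ = ENNReal.ofReal (84 * D) := by
          rw [lintegral_add_left (measurable_const.indicator mB), lintegral_indicator_const mB,
            lintegral_indicator_const mS, volB, volS, ← ENNReal.ofReal_mul (by positivity),
            ← ENNReal.ofReal_mul (by positivity), ← ENNReal.ofReal_add (by positivity) (by positivity)]
          congr 1
          field_simp
          ring
      _ ≤ _ := ENNReal.ofReal_le_ofReal (by linarith)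
  · set R : Set (ℝ × ℝ) := Set.Ioo (-1 : ℝ) (-δ) ×ˢ Set.Ioo (c + 1) (c + 1 + 1) with hR
    have mR : MeasurableSet R := measurableSet_Ioo.prod measurableSet_Ioo
    have hsub : R ⊆ Set.univ ×ˢ Set.Ioo c (c + 3) := by
      rintro p ⟨_, h⟩
      exact ⟨trivial, by linarith [h.1], by linarith [h.2]⟩
    refine le_trans ?_ (lintegral_mono_set hsub)
    have hpt : ∀ p ∈ R, ‖wexp p.1 p.2 * (derivative P).eval (wexp p.1 p.2)‖ₑ ≤ ‖dX v p‖ₑ := by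
      rintro p ⟨h1, h2⟩
      have a1 : α p.1 = 1 := hα1 _ h1.1.le h1.2.le
      have b1 : β p.2 = 1 := hβ1 _ h2.1.le (by linarith [h2.2])
      have a2 : α' p.1 = 0 := by
        have : α =ᶠ[nhds p.1] fun _ => 1 := by
          filter_upwards [Ioo_mem_nhds h1.1 h1.2] with x hx
          exact hα1 x hx.1.le hx.2.le
        rw [← (hα' p.1).deriv, this.deriv_eq]; simp
      rw [vx, a1, b1, a2, ← ofReal_norm, ← ofReal_norm]
      apply ENNReal.ofReal_le_ofReal
      simp only [Complex.ofReal_zero, Complex.ofReal_one, zero_mul, zero_add, one_mul]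
      rw [norm_mul (2 * π : ℂ)]
      refine le_mul_of_one_le_left (norm_nonneg _) ?_
      simp only [norm_mul, Complex.norm_ofNat, Complex.norm_real, Real.norm_eq_abs, abs_of_pos Real.pi_pos]
      linarith [Real.pi_gt_three]
    refine le_trans ?_ (setLIntegral_mono' mR hpt)
    have hcont : Continuous (fun p : ℝ × ℝ => wexp p.1 p.2 * (derivative P).eval (wexp p.1 p.2)) :=
      wexp_smooth.continuous.mul ((derivative P).continuous.comp wexp_smooth.continuous)
    have key := strip_lower n P (1 / √n) (by positivity) hPc (c + 1) n le_rfl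
    have eq : ∫⁻ p in R, ‖wexp p.1 p.2 * (derivative P).eval (wexp p.1 p.2)‖ₑ =
        ∫⁻ x in Set.Ico (-1 : ℝ) (-(2 ^ n)⁻¹), ∫⁻ y in Set.Ioo (c + 1) (c + 1 + 1),
        ‖wexp x y * (derivative P).eval (wexp x y)‖ₑ := by
      rw [hR, Measure.volume_eq_prod, setLIntegral_prod _ hcont.enorm.aemeasurable,
        ← hδd, restrict_Ioo_eq_restrict_Ico]
    rw [eq]
    refine le_trans (ENNReal.ofReal_le_ofReal (hn.trans (le_of_eq ?_))) key
    have : (n : ℝ) = √n * √n := (Real.mul_self_sqrt hn'.le).symm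
    have h0 : √(n:ℝ) ≠ 0 := (Real.sqrt_pos.2 hn').ne'
    rw [show (n : ℝ) * (1 / √n * Real.exp (-(4 * π)) / 2) = (n * (1 / √n)) * (Real.exp (-(4 * π)) / 2) by ring]
    congr 1
    field_simp
    rw [Real.sq_sqrt hn'.le]

lemma fderiv_cmul {F : ℝ × ℝ → ℂ} (hF : ContDiff ℝ (⊤ : ℕ∞) F) (c : ℂ) (p v : ℝ × ℝ) :
    fderiv ℝ (fun p => c * F p) p v = c * fderiv ℝ F p v := by
  rw [fderiv_const_mul (hF.differentiable (by simp) p)]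
  simp

/-- weights -/
def wt (n : ℤ) : ℝ := (1 / 2) ^ n.natAbs

lemma wt_pos (n : ℤ) : 0 < wt n := by unfold wt; positivity

lemma wt_summable : Summable wt := by
  apply Summable.of_nat_of_neg
  · simpa [wt] using summable_geometric_two
  · simpa [wt] using summable_geometric_two

lemma block' (D : ℝ) (hD : ∀ x, |deriv Real.smoothTransition x| ≤ D) (n : ℤ) :
    ∃ v : ℝ × ℝ → ℂ, ContDiff ℝ (⊤ : ℕ∞) v ∧ (∀ p, 0 ≤ (v p).re) ∧
      (∀ p, p.2 ∉ Set.Icc (8 * n + 2 : ℝ) (8 * n + 5) → v p = 0) ∧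
      ∫⁻ p, ‖v p‖ₑ ≤ ENNReal.ofReal (wt n) * ENNReal.ofReal (24 + 84 * D) ∧
      ∫⁻ p, ‖dbar v p‖ₑ ≤ ENNReal.ofReal (wt n) * ENNReal.ofReal (24 + 84 * D) ∧
      ENNReal.ofReal n ≤ ∫⁻ p in Set.univ ×ˢ Set.Ioo (8 * n + 2 : ℝ) (8 * n + 5), ‖dX v p‖ₑ := by
  obtain ⟨v, h1, h2, h3, h4, h5, h6⟩ := block D hD (8 * n + 2) (n / wt n)
  have hw := wt_pos n
  have e5 : (8 * n + 2 + 3 : ℝ) = 8 * n + 5 := by ring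
  rw [e5] at h3 h6
  have ew : ‖(wt n : ℂ)‖ₑ = ENNReal.ofReal (wt n) := by
    rw [← ofReal_norm, Complex.norm_real, Real.norm_eq_abs, abs_of_pos hw]
  have eX : ∀ p, dX (fun p => (wt n : ℂ) * v p) p = wt n * dX v p := fun p => fderiv_cmul h1 _ _ _
  have eB : ∀ p, dbar (fun p => (wt n : ℂ) * v p) p = wt n * dbar v p := by
    intro p
    simp only [dbar, dX, dY, fderiv_cmul h1]
    ring
  refine ⟨fun p => (wt n : ℂ) * v p, contDiff_const.mul h1, ?_, ?_, ?_, ?_, ?_⟩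
  · intro p
    rw [Complex.re_ofReal_mul]
    exact mul_nonneg hw.le (h2 p)
  · intro p hp
    simp [h3 p hp]
  · simp only [enorm_mul, ew]
    rw [lintegral_const_mul' _ _ ENNReal.ofReal_ne_top]
    gcongr
  · simp only [eB, enorm_mul, ew]
    rw [lintegral_const_mul' _ _ ENNReal.ofReal_ne_top]
    gcongr
  · simp only [eX, enorm_mul, ew]
    rw [lintegral_const_mul' _ _ ENNReal.ofReal_ne_top]
    calc ENNReal.ofReal n = ENNReal.ofReal (wt n) * ENNReal.ofReal (n / wt n) := by
          rw [← ENNReal.ofReal_mul hw.le]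
          congr 1
          field_simp
      _ ≤ _ := by gcongr

lemma glue_int (C : ℝ) (G : ℝ × ℝ → ℂ) (g : ℤ → ℝ × ℝ → ℂ) (hG : ∀ p, G p = g ⌊p.2 / 8⌋ p)
    (hg : ∀ n, ∫⁻ p, ‖g n p‖ₑ ≤ ENNReal.ofReal (wt n) * ENNReal.ofReal C) :
    ∫⁻ p, ‖G p‖ₑ < ⊤ := by
  have hU : (⋃ n : ℤ, {p : ℝ × ℝ | ⌊p.2 / 8⌋ = n}) = Set.univ := by
    ext p; simp
  calc ∫⁻ p, ‖G p‖ₑ = ∫⁻ p in ⋃ n : ℤ, {p : ℝ × ℝ | ⌊p.2 / 8⌋ = n}, ‖G p‖ₑ := by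
        rw [hU, setLIntegral_univ]
    _ ≤ ∑' n : ℤ, ∫⁻ p in {p : ℝ × ℝ | ⌊p.2 / 8⌋ = n}, ‖G p‖ₑ := lintegral_iUnion_le _ _
    _ ≤ ∑' n : ℤ, ENNReal.ofReal (wt n) * ENNReal.ofReal C := by
        refine ENNReal.tsum_le_tsum fun n => ?_
        have hm : MeasurableSet {p : ℝ × ℝ | ⌊p.2 / 8⌋ = n} :=
          (Int.measurable_floor.comp (measurable_snd.div_const 8)) (measurableSet_singleton n)
        calc ∫⁻ p in {p : ℝ × ℝ | ⌊p.2 / 8⌋ = n}, ‖G p‖ₑ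
            = ∫⁻ p in {p : ℝ × ℝ | ⌊p.2 / 8⌋ = n}, ‖g n p‖ₑ := by
              refine setLIntegral_congr_fun hm fun p hp => ?_
              have hp' : ⌊p.2 / 8⌋ = n := hp
              simp only [hG, hp']
          _ ≤ ∫⁻ p, ‖g n p‖ₑ := setLIntegral_le_lintegral _ _
          _ ≤ _ := hg n
    _ < ⊤ := by
        rw [ENNReal.tsum_mul_right, ← ENNReal.ofReal_tsum_of_nonneg (fun n => (wt_pos n).le) wt_summable]
        exact ENNReal.mul_lt_top ENNReal.ofReal_lt_top ENNReal.ofReal_lt_top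

lemma exists_glued : ∃ T : ℝ × ℝ → ℂ, ContDiff ℝ (⊤ : ℕ∞) T ∧ (∀ p, 0 ≤ (T p).re) ∧
    Integrable T ∧ Integrable (dbar T) ∧ ¬ Integrable (dX T) := by
  obtain ⟨D, hD0, hD⟩ := st_deriv_bound
  choose u h1 h2 h3 h4 h5 h6 using block' D hD
  set T : ℝ × ℝ → ℂ := fun p => u ⌊p.2 / 8⌋ p with hT
  have loc : ∀ (n : ℤ) (p : ℝ × ℝ), 8 * (n : ℝ) - 1 < p.2 → p.2 < 8 * n + 9 → T p = u n p := by
    intro n p ha hb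
    simp only [hT]
    have f1 := Int.floor_le (p.2 / 8)
    have f2 := Int.lt_floor_add_one (p.2 / 8)
    set k := ⌊p.2 / 8⌋ with hk
    by_cases hkn : k = n
    · rw [hkn]
    · have z1 : u n p = 0 := by
        apply h3
        rintro ⟨q1, q2⟩
        apply hkn
        rw [hk, Int.floor_eq_iff]
        constructor <;> linarith
      rw [z1]
      apply h3
      rintro ⟨q1, q2⟩
      rcases lt_or_gt_of_ne hkn with h | h
      · have : (k : ℝ) + 1 ≤ n := by exact_mod_cast h
        linarith
      · have : (n : ℝ) + 1 ≤ k := by exact_mod_cast h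
        linarith
  have ev : ∀ (n : ℤ) (p : ℝ × ℝ), 8 * (n : ℝ) - 1 < p.2 → p.2 < 8 * n + 9 → T =ᶠ[nhds p] u n := by
    intro n p ha hb
    have hm : {q : ℝ × ℝ | 8 * (n : ℝ) - 1 < q.2 ∧ q.2 < 8 * n + 9} ∈ nhds p :=
      ((isOpen_lt continuous_const continuous_snd).inter
        (isOpen_lt continuous_snd continuous_const)).mem_nhds ⟨ha, hb⟩
    filter_upwards [hm] with q hq
    exact loc n q hq.1 hq.2
  have fl : ∀ p : ℝ × ℝ, T =ᶠ[nhds p] u ⌊p.2 / 8⌋ := by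
    intro p
    have f1 := Int.floor_le (p.2 / 8)
    have f2 := Int.lt_floor_add_one (p.2 / 8)
    apply ev <;> linarith
  have Tsm : ContDiff ℝ (⊤ : ℕ∞) T := by
    rw [contDiff_iff_contDiffAt]
    intro p
    exact (h1 _).contDiffAt.congr_of_eventuallyEq (fl p)
  refine ⟨T, Tsm, fun p => h2 _ p, ?_, ?_, ?_⟩
  · exact ⟨Tsm.continuous.aestronglyMeasurable, glue_int _ T u (fun p => rfl) h4⟩
  · refine ⟨(dbar_smooth Tsm).continuous.aestronglyMeasurable,
      glue_int _ (dbar T) (fun n => dbar (u n)) (fun p => ?_) h5⟩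
    simp only [dbar, dX, dY, (fl p).fderiv_eq]
  · intro H
    have hfin : ∫⁻ p, ‖dX T p‖ₑ < ⊤ := H.2
    obtain ⟨N, hN⟩ := exists_nat_gt (∫⁻ p, ‖dX T p‖ₑ).toReal
    have h7 := h6 (N : ℤ)
    have hm : MeasurableSet (Set.univ ×ˢ Set.Ioo (8 * ((N : ℤ) : ℝ) + 2 : ℝ) (8 * ((N : ℤ) : ℝ) + 5) : Set (ℝ × ℝ)) :=
      MeasurableSet.univ.prod measurableSet_Ioo
    have h8 : ENNReal.ofReal N ≤ ∫⁻ p, ‖dX T p‖ₑ := by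
      calc ENNReal.ofReal N = ENNReal.ofReal ((N : ℤ) : ℝ) := by simp
        _ ≤ _ := h7
        _ = ∫⁻ p in Set.univ ×ˢ Set.Ioo (8 * ((N : ℤ) : ℝ) + 2 : ℝ) (8 * ((N : ℤ) : ℝ) + 5), ‖dX T p‖ₑ := by
            refine setLIntegral_congr_fun hm fun p hp => ?_
            have := (ev N p (by linarith [hp.2.1]) (by linarith [hp.2.2])).fderiv_eq (𝕜 := ℝ)
            simp only [dX, this]
        _ ≤ _ := setLIntegral_le_lintegral _ _
    have := (ENNReal.ofReal_le_iff_le_toReal hfin.ne).1 h8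
    linarith

/-- Gaussian background -/
def gau (p : ℝ × ℝ) : ℂ := ((Real.exp (-1 * p.1 ^ 2) : ℝ) : ℂ) * ((Real.exp (-1 * p.2 ^ 2) : ℝ) : ℂ)

lemma gau_smooth : ContDiff ℝ (⊤ : ℕ∞) gau := by
  have h : ContDiff ℝ (⊤ : ℕ∞) (fun x : ℝ => ((Real.exp (-1 * x ^ 2) : ℝ) : ℂ)) :=
    Complex.ofRealCLM.contDiff.comp (contDiff_const.mul (contDiff_id.pow 2)).exp
  exact (h.comp contDiff_fst).mul (h.comp contDiff_snd)

lemma gau_d (x : ℝ) : HasDerivAt (fun x : ℝ => ((Real.exp (-1 * x ^ 2) : ℝ) : ℂ))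
    (-2 * ((x * Real.exp (-1 * x ^ 2) : ℝ) : ℂ)) x := by
  have h : HasDerivAt (fun x : ℝ => Real.exp (-1 * x ^ 2)) (Real.exp (-1 * x ^ 2) * (-1 * (2 * x))) x := by
    have h1 : HasDerivAt (fun x : ℝ => x ^ 2) (2 * x) x := by simpa using hasDerivAt_pow 2 x
    exact (h1.const_mul (-1)).exp
  refine h.ofReal_comp.congr_deriv ?_
  push_cast
  ring

lemma gau_i0 : Integrable (fun x : ℝ => ((Real.exp (-1 * x ^ 2) : ℝ) : ℂ)) :=
  (integrable_exp_neg_mul_sq one_pos).ofReal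

lemma gau_i1 : Integrable (fun x : ℝ => (-2 * ((x * Real.exp (-1 * x ^ 2) : ℝ) : ℂ))) :=
  ((integrable_mul_exp_neg_mul_sq one_pos).ofReal).const_mul _

lemma gau_int : Integrable gau := gau_i0.mul_prod gau_i0

lemma gau_dX : Integrable (dX gau) := by
  have : dX gau = fun p => (-2 * ((p.1 * Real.exp (-1 * p.1 ^ 2) : ℝ) : ℂ)) *
      ((Real.exp (-1 * p.2 ^ 2) : ℝ) : ℂ) := by
    ext p
    exact dX_eq gau_smooth p _ ((gau_d p.1).mul_const ((Real.exp (-1 * p.2 ^ 2) : ℝ) : ℂ))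
  rw [this]
  exact gau_i1.mul_prod gau_i0

lemma gau_dY : Integrable (dY gau) := by
  have : dY gau = fun p => ((Real.exp (-1 * p.1 ^ 2) : ℝ) : ℂ) *
      (-2 * ((p.2 * Real.exp (-1 * p.2 ^ 2) : ℝ) : ℂ)) := by
    ext p
    exact dY_eq gau_smooth p _ ((gau_d p.2).const_mul ((Real.exp (-1 * p.1 ^ 2) : ℝ) : ℂ))
  rw [this]
  exact gau_i0.mul_prod gau_i1

/-- There exist a probability density `ϱ ∈ C^∞(ℝ²)` and a `C^∞` vector field `b : ℝ² → ℝ²`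
such that `Δϱ − div(ϱ b) = 0` holds in the weak sense
(`∫ [Δφ + ⟨b,∇φ⟩] ϱ dx = 0` for all test functions `φ`) and `|b|ϱ ∈ L¹(ℝ²)`, but
`|∇ϱ| ∉ L¹(ℝ²)`. -/
theorem smooth_density_FPK_gradient_not_integrable :
    ∃ (ϱ : ℝ × ℝ → ℝ) (b : ℝ × ℝ → ℝ × ℝ),
      ContDiff ℝ (⊤ : ℕ∞) ϱ ∧ (∀ p, 0 ≤ ϱ p) ∧ (∫ p, ϱ p = 1) ∧
      ContDiff ℝ (⊤ : ℕ∞) b ∧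
      (∀ φ : ℝ × ℝ → ℝ, IsTest φ →
        ∫ p, (pd1 (pd1 φ) p + pd2 (pd2 φ) p + fderiv ℝ φ p (b p)) * ϱ p = 0) ∧
      Integrable (fun p => emag (b p) * ϱ p) ∧
      ¬ Integrable (fun p => emag (pd1 ϱ p, pd2 ϱ p)) := by
  obtain ⟨T, hT, hre, hTi, hTd, hTx⟩ := exists_glued
  have hv : ∀ p v, fderiv ℝ (fun p => gau p + T p) p v = fderiv ℝ gau p v + fderiv ℝ T p v := by
    intro p v
    have := fderiv_add (gau_smooth.differentiable (by simp) p) (hT.differentiable (by simp) p)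
    change fderiv ℝ (gau + T) p v = _
    rw [this]
    rfl
  refine reduction2 (fun p => gau p + T p) (gau_smooth.add hT) ?_ ?_ ?_ ?_
  · intro p
    have h1 : 0 < (gau p).re := by
      rw [gau, ← Complex.ofReal_mul, Complex.ofReal_re]
      positivity
    have h2 := hre p
    simp only [Complex.add_re]
    linarith
  · exact (gau_int.add hTi).re
  · have : dbar (fun p => gau p + T p) = fun p => (dX gau p + Complex.I * dY gau p) + dbar T p := by
      ext p
      simp only [dbar, dX, dY, hv]
      ring
    rw [this]
    exact (gau_dX.add (gau_dY.const_mul _)).add hTd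
  · intro H
    apply hTx
    refine (H.sub gau_dX).congr (Filter.Eventually.of_forall fun p => ?_)
    simp only [dX, hv, Pi.sub_apply]
    ring
end
end

section
/- For every n ∈ ℕ there exist a probability density ϱ_n ∈ C^∞(ℝ²) and a C^∞ vector field b_n: ℝ² → ℝ² with |b_n|ϱ_n ∈ L¹(ℝ²) such that Δϱ_n − div(ϱ_n b_n) = 0 in the weak sense and ∫_{ℝ²} |∇ϱ_n| dx ≥ n ∫_{ℝ²} |b_n| ϱ_n dx. -/
open MeasureTheory Real

noncomputable section

/-! Basic facts -/

lemma emag_eq_norm (v : ℝ × ℝ) : emag v = ‖Complex.equivRealProdCLM.symm v‖ := by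
  rw [Complex.norm_eq_sqrt_sq_add_sq]; simp [emag]

lemma emag_nonneg (v : ℝ × ℝ) : 0 ≤ emag v := Real.sqrt_nonneg _

lemma emag_zero : emag 0 = 0 := by simp [emag]

lemma emag_add (u v : ℝ × ℝ) : emag (u + v) ≤ emag u + emag v := by
  simp only [emag_eq_norm, map_add]; exact norm_add_le _ _

lemma emag_smul (c : ℝ) (v : ℝ × ℝ) : emag (c • v) = |c| * emag v := by
  simp only [emag_eq_norm, map_smul, norm_smul, Real.norm_eq_abs]

lemma emag_sum {ι : Type*} (s : Finset ι) (v : ι → ℝ × ℝ) :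
    emag (∑ i ∈ s, v i) ≤ ∑ i ∈ s, emag (v i) := by
  simp only [emag_eq_norm, map_sum]; exact norm_sum_le _ _

lemma emag_continuous : Continuous emag := by
  unfold emag; fun_prop

lemma abs_snd_le_emag (v : ℝ × ℝ) : |v.2| ≤ emag v := by
  rw [emag, ← Real.sqrt_sq_eq_abs]
  exact Real.sqrt_le_sqrt (by nlinarith [sq_nonneg v.1])

/-- gradient -/
def gr (f : ℝ × ℝ → ℝ) (p : ℝ × ℝ) : ℝ × ℝ := (pd1 f p, pd2 f p)

/-- gradient plus rotated gradient -/
def FF (f g : ℝ × ℝ → ℝ) (p : ℝ × ℝ) : ℝ × ℝ := (pd1 f p + pd2 g p, pd2 f p - pd1 g p)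

lemma contDiff_pd1 {f : ℝ × ℝ → ℝ} (hf : ContDiff ℝ (⊤ : ℕ∞) f) :
    ContDiff ℝ (⊤ : ℕ∞) (pd1 f) := by
  have : ContDiff ℝ (⊤ : ℕ∞) (fderiv ℝ f) := hf.fderiv_right (by simp)
  exact this.clm_apply contDiff_const

lemma contDiff_pd2 {f : ℝ × ℝ → ℝ} (hf : ContDiff ℝ (⊤ : ℕ∞) f) :
    ContDiff ℝ (⊤ : ℕ∞) (pd2 f) := by
  have : ContDiff ℝ (⊤ : ℕ∞) (fderiv ℝ f) := hf.fderiv_right (by simp)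
  exact this.clm_apply contDiff_const

lemma contDiff_gr {f : ℝ × ℝ → ℝ} (hf : ContDiff ℝ (⊤ : ℕ∞) f) :
    ContDiff ℝ (⊤ : ℕ∞) (gr f) := (contDiff_pd1 hf).prodMk (contDiff_pd2 hf)

lemma contDiff_FF {f g : ℝ × ℝ → ℝ} (hf : ContDiff ℝ (⊤ : ℕ∞) f)
    (hg : ContDiff ℝ (⊤ : ℕ∞) g) :
    ContDiff ℝ (⊤ : ℕ∞) (FF f g) :=
  ((contDiff_pd1 hf).add (contDiff_pd2 hg)).prodMk ((contDiff_pd2 hf).sub (contDiff_pd1 hg))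

lemma hcs_pd1 {f : ℝ × ℝ → ℝ} (hf : HasCompactSupport f) : HasCompactSupport (pd1 f) :=
  hf.fderiv_apply ℝ _

lemma hcs_pd2 {f : ℝ × ℝ → ℝ} (hf : HasCompactSupport f) : HasCompactSupport (pd2 f) :=
  hf.fderiv_apply ℝ _

lemma hcs_prod {f g : ℝ × ℝ → ℝ} (hf : HasCompactSupport f) (hg : HasCompactSupport g) :
    HasCompactSupport (fun p => emag (f p, g p)) := by
  refine HasCompactSupport.intro (K := tsupport f ∪ tsupport g)
    (IsCompact.union hf hg) ?_
  intro x hx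
  simp only [Set.mem_union, not_or] at hx
  rw [image_eq_zero_of_notMem_tsupport hx.1, image_eq_zero_of_notMem_tsupport hx.2]
  exact emag_zero

lemma integrable_gr {f : ℝ × ℝ → ℝ} (hf : ContDiff ℝ (⊤ : ℕ∞) f) (hc : HasCompactSupport f) :
    Integrable (fun p => emag (gr f p)) :=
  (emag_continuous.comp (contDiff_gr hf).continuous).integrable_of_hasCompactSupport
    (hcs_prod (hcs_pd1 hc) (hcs_pd2 hc))

lemma integrable_FF {f g : ℝ × ℝ → ℝ} (hf : ContDiff ℝ (⊤ : ℕ∞) f) (hc : HasCompactSupport f)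
    (hg : ContDiff ℝ (⊤ : ℕ∞) g) (hd : HasCompactSupport g) :
    Integrable (fun p => emag (FF f g p)) :=
  (emag_continuous.comp (contDiff_FF hf hg).continuous).integrable_of_hasCompactSupport
    (hcs_prod ((hcs_pd1 hc).add (hcs_pd2 hd)) ((hcs_pd2 hc).sub (hcs_pd1 hd)))

lemma pd_symm {φ : ℝ × ℝ → ℝ} (hφ : ContDiff ℝ (⊤ : ℕ∞) φ) (p : ℝ × ℝ) :
    pd2 (pd1 φ) p = pd1 (pd2 φ) p := by
  have h := (hφ.contDiffAt (x := p)).isSymmSndFDerivAt (by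
    rw [minSmoothness_of_isRCLikeNormedField]
    exact WithTop.coe_le_coe.2 (le_top (a := (2 : ℕ∞))))
  have h1 : ContDiff ℝ (⊤ : ℕ∞) (fderiv ℝ φ) := hφ.fderiv_right (by simp)
  have hd : DifferentiableAt ℝ (fderiv ℝ φ) p := (h1.differentiable (by simp)) p
  unfold pd1 pd2
  rw [fderiv_clm_apply hd (by fun_prop), fderiv_clm_apply hd (by fun_prop)]
  simpa using h (0, 1) (1, 0)

/-- Integration by parts, packaged. -/
lemma ibp {u w : ℝ × ℝ → ℝ} (hu : ContDiff ℝ (⊤ : ℕ∞) u) (hc : HasCompactSupport u)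
    (hw : ContDiff ℝ (⊤ : ℕ∞) w) (v : ℝ × ℝ) :
    Integrable (fun p => fderiv ℝ u p v * w p + u p * fderiv ℝ w p v) ∧
    ∫ p, (fderiv ℝ u p v * w p + u p * fderiv ℝ w p v) = 0 := by
  have cu : Continuous (fun p => fderiv ℝ u p v) :=
    (ContDiff.clm_apply (hu.fderiv_right (m := (⊤ : ℕ∞)) (by simp)) contDiff_const).continuous
  have cw : Continuous (fun p => fderiv ℝ w p v) :=
    (ContDiff.clm_apply (hw.fderiv_right (m := (⊤ : ℕ∞)) (by simp)) contDiff_const).continuous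
  have i1 : Integrable (fun p => fderiv ℝ u p v * w p) :=
    (cu.mul hw.continuous).integrable_of_hasCompactSupport ((hc.fderiv_apply ℝ v).mul_right)
  have i2 : Integrable (fun p => u p * fderiv ℝ w p v) :=
    (hu.continuous.mul cw).integrable_of_hasCompactSupport (hc.mul_right)
  have i3 : Integrable (fun p => u p * w p) :=
    (hu.continuous.mul hw.continuous).integrable_of_hasCompactSupport (hc.mul_right)
  refine ⟨i1.add i2, ?_⟩
  rw [integral_add i1 i2, integral_mul_fderiv_eq_neg_fderiv_mul_of_integrable i1 i2 i3
    (fun x _ => hu.differentiable (by simp) x) (fun x _ => hw.differentiable (by simp) x)]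
  ring

lemma weak_eq {r ψ φ : ℝ × ℝ → ℝ} (hr : ContDiff ℝ (⊤ : ℕ∞) r) (hψ : ContDiff ℝ (⊤ : ℕ∞) ψ)
    (hφ : IsTest φ) :
    ∫ p, ((pd1 (pd1 φ) p + pd2 (pd2 φ) p) * r p + fderiv ℝ φ p (FF r ψ p)) = 0 := by
  obtain ⟨hs, hc⟩ := hφ
  obtain ⟨a1, a2⟩ := ibp (contDiff_pd1 hs) (hcs_pd1 hc) hr (1, 0)
  obtain ⟨b1, b2⟩ := ibp (contDiff_pd2 hs) (hcs_pd2 hc) hr (0, 1)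
  obtain ⟨c1, c2⟩ := ibp (contDiff_pd1 hs) (hcs_pd1 hc) hψ (0, 1)
  obtain ⟨d1, d2⟩ := ibp (contDiff_pd2 hs) (hcs_pd2 hc) hψ (1, 0)
  have key := integral_sub ((a1.add b1).add c1) d1
  have key2 := integral_add (a1.add b1) c1
  have key3 := integral_add a1 b1
  simp only [Pi.add_apply] at key key2 key3
  rw [key2, key3, a2, b2, c2, d2] at key
  simp only [add_zero, sub_zero] at key
  rw [← key]
  congr 1
  ext p
  have e : fderiv ℝ φ p (FF r ψ p) = (FF r ψ p).1 * pd1 φ p + (FF r ψ p).2 * pd2 φ p := by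
    have : FF r ψ p = (FF r ψ p).1 • ((1, 0) : ℝ × ℝ) + (FF r ψ p).2 • ((0, 1) : ℝ × ℝ) := by
      ext <;> simp
    conv_lhs => rw [this]
    rw [map_add, map_smul, map_smul]; rfl
  rw [e]
  have s := pd_symm hs p
  simp only [FF]
  change _ = (pd1 (pd1 φ) p * r p + pd1 φ p * pd1 r p) + (pd2 (pd2 φ) p * r p + pd2 φ p * pd2 r p)
    + (pd2 (pd1 φ) p * ψ p + pd1 φ p * pd2 ψ p) - (pd1 (pd2 φ) p * ψ p + pd2 φ p * pd1 ψ p)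
  rw [s]; ring

/-! The building block -/

/-- cutoff -/
def chi (s : ℝ) : ℝ := Real.smoothTransition (4 - s)

lemma chi_contDiff : ContDiff ℝ (⊤ : ℕ∞) chi :=
  Real.smoothTransition.contDiff.comp (contDiff_const.sub contDiff_id)

lemma chi_one {s : ℝ} (hs : s ≤ 3) : chi s = 1 :=
  Real.smoothTransition.one_of_one_le (by linarith)

lemma chi_zero {s : ℝ} (hs : 4 ≤ s) : chi s = 0 :=
  Real.smoothTransition.zero_of_nonpos (by linarith)

lemma chi_nonneg (s : ℝ) : 0 ≤ chi s := Real.smoothTransition.nonneg _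

lemma chi_le_one (s : ℝ) : chi s ≤ 1 := Real.smoothTransition.le_one _

lemma chi_deriv_zero {s : ℝ} (hs : s < 3) : deriv chi s = 0 := by
  have : chi =ᶠ[nhds s] fun _ => 1 := by
    filter_upwards [Iio_mem_nhds hs] with t ht using chi_one (le_of_lt ht)
  rw [this.deriv_eq]; simp

lemma chi_deriv_zero' {s : ℝ} (hs : 4 < s) : deriv chi s = 0 := by
  have : chi =ᶠ[nhds s] fun _ => 0 := by
    filter_upwards [Ioi_mem_nhds hs] with t ht using chi_zero (le_of_lt ht)
  rw [this.deriv_eq]; simp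

/-- squared radius -/
def sq2 (p : ℝ × ℝ) : ℝ := p.1 ^ 2 + p.2 ^ 2

lemma sq2_nonneg (p : ℝ × ℝ) : 0 ≤ sq2 p := by unfold sq2; positivity

lemma sq2_contDiff : ContDiff ℝ (⊤ : ℕ∞) sq2 := by unfold sq2; fun_prop

lemma norm_sq_le_sq2 (p : ℝ × ℝ) : ‖p‖ ^ 2 ≤ sq2 p := by
  rw [Prod.norm_def, sq2]
  rcases max_choice ‖p.1‖ ‖p.2‖ with h | h <;> rw [h, Real.norm_eq_abs, sq_abs] <;>
    nlinarith [sq_nonneg p.1, sq_nonneg p.2]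

lemma hcs_of_sq2 {f : ℝ × ℝ → ℝ} (h : ∀ p, 4 < sq2 p → f p = 0) : HasCompactSupport f := by
  refine HasCompactSupport.intro (isCompact_closedBall (0 : ℝ × ℝ) 2) ?_
  intro p hp
  apply h
  rw [mem_closedBall_zero_iff, not_le] at hp
  nlinarith [norm_sq_le_sq2 p]

/-- radial profile -/
def UU (a s : ℝ) : ℝ := chi s / (s + a)

/-- derivative of the profile -/
def UU' (a s : ℝ) : ℝ := (deriv chi s * (s + a) - chi s) / (s + a) ^ 2

lemma UU_hasDerivAt {a s : ℝ} (h : s + a ≠ 0) : HasDerivAt (UU a) (UU' a s) s := by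
  have h1 : HasDerivAt chi (deriv chi s) s :=
    (chi_contDiff.differentiable (by simp) s).hasDerivAt
  have h2 : HasDerivAt (fun s : ℝ => s + a) 1 s := (hasDerivAt_id s).add_const a
  have := h1.fun_div h2 h
  simp only [mul_one] at this
  exact this

def hh (a : ℝ) (p : ℝ × ℝ) : ℝ := p.1 * UU a (sq2 p)
def ps (a : ℝ) (p : ℝ × ℝ) : ℝ := p.2 * UU a (sq2 p)

lemma UU_contDiff {a : ℝ} (ha : 0 < a) : ContDiff ℝ (⊤ : ℕ∞) (fun p => UU a (sq2 p)) := by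
  unfold UU
  exact (chi_contDiff.comp sq2_contDiff).div (sq2_contDiff.add contDiff_const)
    (fun p => by have := sq2_nonneg p; positivity)

lemma hh_contDiff {a : ℝ} (ha : 0 < a) : ContDiff ℝ (⊤ : ℕ∞) (hh a) :=
  contDiff_fst.mul (UU_contDiff ha)

lemma ps_contDiff {a : ℝ} (ha : 0 < a) : ContDiff ℝ (⊤ : ℕ∞) (ps a) :=
  contDiff_snd.mul (UU_contDiff ha)

lemma hh_zero (a : ℝ) {p : ℝ × ℝ} (h : 4 ≤ sq2 p) : hh a p = 0 := by
  simp [hh, UU, chi_zero h]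

lemma ps_zero (a : ℝ) {p : ℝ × ℝ} (h : 4 ≤ sq2 p) : ps a p = 0 := by
  simp [ps, UU, chi_zero h]

lemma pd1_of {f : ℝ × ℝ → ℝ} {p : ℝ × ℝ} {d : ℝ} (hf : ContDiff ℝ (⊤ : ℕ∞) f)
    (h : HasDerivAt (fun t => f (t, p.2)) d p.1) : pd1 f p = d := by
  have h1 : HasFDerivAt f (fderiv ℝ f p) (p.1, p.2) :=
    (hf.differentiable (by simp) p).hasFDerivAt
  have h2 : HasDerivAt (fun t : ℝ => (t, p.2)) ((1 : ℝ), (0 : ℝ)) p.1 :=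
    (hasDerivAt_id p.1).prodMk (hasDerivAt_const p.1 p.2)
  exact (h1.comp_hasDerivAt p.1 h2).unique h

lemma pd2_of {f : ℝ × ℝ → ℝ} {p : ℝ × ℝ} {d : ℝ} (hf : ContDiff ℝ (⊤ : ℕ∞) f)
    (h : HasDerivAt (fun t => f (p.1, t)) d p.2) : pd2 f p = d := by
  have h1 : HasFDerivAt f (fderiv ℝ f p) (p.1, p.2) :=
    (hf.differentiable (by simp) p).hasFDerivAt
  have h2 : HasDerivAt (fun t : ℝ => (p.1, t)) ((0 : ℝ), (1 : ℝ)) p.2 :=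
    (hasDerivAt_const p.2 p.1).prodMk (hasDerivAt_id p.2)
  exact (h1.comp_hasDerivAt p.2 h2).unique h

lemma UU_d1 {a : ℝ} (ha : 0 < a) (p : ℝ × ℝ) :
    HasDerivAt (fun t => UU a (sq2 (t, p.2))) (UU' a (sq2 p) * (2 * p.1)) p.1 := by
  have h0 : sq2 p + a ≠ 0 := by have := sq2_nonneg p; positivity
  have h1 : HasDerivAt (fun t => sq2 (t, p.2)) (2 * p.1) p.1 := by
    have := ((hasDerivAt_id p.1).pow 2).add_const (p.2 ^ 2)
    simpa [sq2] using this
  exact HasDerivAt.comp p.1 (h₂ := UU a) (UU_hasDerivAt h0) h1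

lemma UU_d2 {a : ℝ} (ha : 0 < a) (p : ℝ × ℝ) :
    HasDerivAt (fun t => UU a (sq2 (p.1, t))) (UU' a (sq2 p) * (2 * p.2)) p.2 := by
  have h0 : sq2 p + a ≠ 0 := by have := sq2_nonneg p; positivity
  have h1 : HasDerivAt (fun t => sq2 (p.1, t)) (2 * p.2) p.2 := by
    have := ((hasDerivAt_id p.2).pow 2).const_add (p.1 ^ 2)
    simpa [sq2] using this
  exact HasDerivAt.comp p.2 (h₂ := UU a) (UU_hasDerivAt h0) h1

lemma hh_pd1 {a : ℝ} (ha : 0 < a) (p : ℝ × ℝ) :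
    pd1 (hh a) p = UU a (sq2 p) + p.1 * (UU' a (sq2 p) * (2 * p.1)) := by
  apply pd1_of (hh_contDiff ha)
  simpa [hh] using (hasDerivAt_id p.1).fun_mul (UU_d1 ha p)

lemma hh_pd2 {a : ℝ} (ha : 0 < a) (p : ℝ × ℝ) :
    pd2 (hh a) p = p.1 * (UU' a (sq2 p) * (2 * p.2)) := by
  apply pd2_of (hh_contDiff ha)
  simpa [hh] using (UU_d2 ha p).const_mul p.1

lemma ps_pd1 {a : ℝ} (ha : 0 < a) (p : ℝ × ℝ) :
    pd1 (ps a) p = p.2 * (UU' a (sq2 p) * (2 * p.1)) := by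
  apply pd1_of (ps_contDiff ha)
  simpa [ps] using (UU_d1 ha p).const_mul p.2

lemma ps_pd2 {a : ℝ} (ha : 0 < a) (p : ℝ × ℝ) :
    pd2 (ps a) p = UU a (sq2 p) + p.2 * (UU' a (sq2 p) * (2 * p.2)) := by
  apply pd2_of (ps_contDiff ha)
  simpa [ps] using (hasDerivAt_id p.2).fun_mul (UU_d2 ha p)

lemma FF_bound {a : ℝ} (ha : 0 < a) (p : ℝ × ℝ) :
    emag (FF (hh a) (ps a) p) ≤ 2 * |deriv chi (sq2 p)| + 2 * (a / (sq2 p + a) ^ 2) := by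
  have hs := sq2_nonneg p
  have e : FF (hh a) (ps a) p = (2 * (deriv chi (sq2 p) * (sq2 p / (sq2 p + a)))
      + 2 * (chi (sq2 p) * (a / (sq2 p + a) ^ 2))) • ((1, 0) : ℝ × ℝ) := by
    rw [FF, hh_pd1 ha, hh_pd2 ha, ps_pd1 ha, ps_pd2 ha]
    have e1 : p.1 * (UU' a (sq2 p) * (2 * p.1)) + p.2 * (UU' a (sq2 p) * (2 * p.2)) =
      2 * sq2 p * UU' a (sq2 p) := by simp only [sq2]; ring
    ext
    · simp only [Prod.smul_mk, smul_eq_mul, mul_one]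
      rw [show ∀ x y z : ℝ, x + y + (x + z) = 2 * x + (y + z) by intros; ring, e1, UU, UU']
      field_simp
      ring
    · simp; ring
  rw [e, emag_smul]
  have : emag (1, 0) = 1 := by simp [emag]
  rw [this, mul_one]
  have h1 : sq2 p / (sq2 p + a) ≤ 1 := by rw [div_le_one (by positivity)]; linarith
  have h2 : 0 ≤ sq2 p / (sq2 p + a) := by positivity
  have h3 : 0 ≤ a / (sq2 p + a) ^ 2 := by positivity
  refine (abs_add_le _ _).trans ?_
  rw [abs_mul, abs_mul, abs_mul, abs_mul, abs_of_nonneg h2, abs_of_nonneg h3,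
    abs_of_nonneg (chi_nonneg _), abs_two]
  have := mul_le_of_le_one_right (abs_nonneg (deriv chi (sq2 p))) h1
  have := mul_le_of_le_one_left h3 (chi_le_one (sq2 p))
  linarith

lemma integrable_chi' : Integrable (fun p => |deriv chi (sq2 p)|) := by
  have c : Continuous (fun p => |deriv chi (sq2 p)|) :=
    ((chi_contDiff.continuous_deriv (by simp)).comp sq2_contDiff.continuous).abs
  refine c.integrable_of_hasCompactSupport (hcs_of_sq2 fun p hp => ?_)
  simp [chi_deriv_zero' hp]

lemma integrable_base : Integrable (fun p : ℝ × ℝ => 1 / (sq2 p + 1) ^ 2) := by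
  have h := integrable_rpow_neg_one_add_norm_sq (E := ℝ × ℝ) (μ := volume) (r := 4)
    (by simp; norm_num)
  refine h.mono' ?_ ?_
  · apply Continuous.aestronglyMeasurable
    have := sq2_contDiff.continuous
    exact continuous_const.div (by fun_prop) (fun p => by have := sq2_nonneg p; positivity)
  · filter_upwards with p
    have h0 := sq2_nonneg p
    have h1 := norm_sq_le_sq2 p
    rw [Real.norm_eq_abs, abs_of_nonneg (by positivity),
      show (-4 / 2 : ℝ) = -((2 : ℕ) : ℝ) by norm_num, Real.rpow_neg (by positivity),
      Real.rpow_natCast, one_div]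
    gcongr ?_⁻¹
    gcongr ?_ ^ 2
    linarith

lemma sq2_smul (c : ℝ) (p : ℝ × ℝ) : sq2 (c • p) = c ^ 2 * sq2 p := by
  simp [sq2]; ring

lemma scaled_base {e : ℝ} (he : 0 < e) :
    Integrable (fun p : ℝ × ℝ => e ^ 2 / (sq2 p + e ^ 2) ^ 2) ∧
    ∫ p : ℝ × ℝ, e ^ 2 / (sq2 p + e ^ 2) ^ 2 = ∫ p : ℝ × ℝ, 1 / (sq2 p + 1) ^ 2 := by
  have e1 : (fun p : ℝ × ℝ => e ^ 2 / (sq2 p + e ^ 2) ^ 2) =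
      fun p => (e ^ 2)⁻¹ * (fun q => 1 / (sq2 q + 1) ^ 2) (e⁻¹ • p) := by
    ext p
    have := sq2_nonneg p
    simp only [sq2_smul]
    have h2 : e⁻¹ ^ 2 * sq2 p + 1 = (sq2 p + e ^ 2) / e ^ 2 := by field_simp
    rw [h2]; field_simp
  rw [e1]
  constructor
  · exact ((integrable_comp_smul_iff volume _ (inv_ne_zero he.ne')).2 integrable_base).const_mul _
  · rw [integral_const_mul,
      Measure.integral_comp_inv_smul volume (fun q : ℝ × ℝ => 1 / (sq2 q + 1) ^ 2) e]
    simp only [Module.finrank_prod, Module.finrank_self, smul_eq_mul]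
    norm_num
    field_simp

lemma FF_integral_bound : ∃ C : ℝ, ∀ e : ℝ, 0 < e →
    ∫ p, emag (FF (hh (e ^ 2)) (ps (e ^ 2)) p) ≤ C := by
  refine ⟨2 * (∫ p, |deriv chi (sq2 p)|) + 2 * ∫ p : ℝ × ℝ, 1 / (sq2 p + 1) ^ 2, ?_⟩
  intro e he
  have ha : 0 < e ^ 2 := by positivity
  obtain ⟨s1, s2⟩ := scaled_base he
  rw [← s2, ← integral_const_mul, ← integral_const_mul,
    ← integral_add (integrable_chi'.const_mul 2) (s1.const_mul 2)]
  refine integral_mono (integrable_FF (hh_contDiff ha) (hcs_of_sq2 fun p hp => hh_zero _ hp.le)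
    (ps_contDiff ha) (hcs_of_sq2 fun p hp => ps_zero _ hp.le))
    ((integrable_chi'.const_mul 2).add (s1.const_mul 2)) (fun p => FF_bound ha p)

/-- dyadic squares -/
def DD (k : ℕ) : Set (ℝ × ℝ) :=
  Set.Ioc ((1 / 2 : ℝ) ^ (k + 1)) ((1 / 2) ^ k) ×ˢ Set.Ioc ((1 / 2 : ℝ) ^ (k + 1)) ((1 / 2) ^ k)

lemma DD_disj (t : Set ℕ) : t.Pairwise (Function.onFun Disjoint DD) := by
  have key : ∀ i j : ℕ, i < j → Disjoint (DD i) (DD j) := by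
    intro i j hij
    rw [Set.disjoint_left]
    rintro p ⟨⟨h1, _⟩, _⟩ ⟨⟨_, h2⟩, _⟩
    have : (1 / 2 : ℝ) ^ j ≤ (1 / 2) ^ (i + 1) :=
      pow_le_pow_of_le_one (by norm_num) (by norm_num) hij
    linarith
  intro i _ j _ hij
  rcases lt_or_gt_of_ne hij with h | h
  · exact key i j h
  · exact (key j i h).symm

lemma DD_vol (k : ℕ) : volume.real (DD k) = (1 / 2) ^ (k + 1) * (1 / 2) ^ (k + 1) := by
  have : (1 / 2 : ℝ) ^ k - (1 / 2) ^ (k + 1) = (1 / 2) ^ (k + 1) := by rw [pow_succ]; ring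
  rw [DD, Measure.volume_eq_prod, measureReal_prod_prod, Real.volume_real_Ioc_of_le, this]
  exact pow_le_pow_of_le_one (by norm_num) (by norm_num) (Nat.le_succ k)

lemma DD_lower {K k : ℕ} (hk : k < K) {p : ℝ × ℝ} (hp : p ∈ DD k) :
    (2 / 9) * (1 / 4) / ((1 / 2) ^ k * (1 / 2) ^ k)
      ≤ emag (gr (hh (((1 / 2 : ℝ) ^ K) ^ 2)) p) := by
  obtain ⟨⟨h1, h2⟩, ⟨h3, h4⟩⟩ := hp
  have hKk : (1 / 2 : ℝ) ^ K ≤ (1 / 2) ^ k :=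
    pow_le_pow_of_le_one (by norm_num) (by norm_num) hk.le
  have hK0 : 0 < (1 / 2 : ℝ) ^ K := by positivity
  have hq1 : (1 / 2 : ℝ) ^ k ≤ 1 := pow_le_one₀ (by norm_num) (by norm_num)
  have hq0 : 0 < (1 / 2 : ℝ) ^ k := by positivity
  rw [pow_succ] at h1 h3
  set q := (1 / 2 : ℝ) ^ k
  set e := (1 / 2 : ℝ) ^ K
  have ha : 0 < e ^ 2 := by positivity
  have hx0 : 0 < p.1 := by nlinarith
  have hy0 : 0 < p.2 := by nlinarith
  have hs2 : sq2 p ≤ 2 * q ^ 2 := by unfold sq2; nlinarith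
  have hs3 : sq2 p < 3 := by nlinarith
  have hs0 := sq2_nonneg p
  refine le_trans ?_ (abs_snd_le_emag _)
  change _ ≤ |pd2 (hh (e ^ 2)) p|
  rw [hh_pd2 ha, UU', chi_deriv_zero hs3, chi_one hs3.le]
  have e1 : p.1 * ((0 * (sq2 p + e ^ 2) - 1) / (sq2 p + e ^ 2) ^ 2 * (2 * p.2)) =
      -(2 * (p.1 * p.2) / (sq2 p + e ^ 2) ^ 2) := by ring
  rw [e1, abs_neg, abs_of_nonneg (by positivity)]
  have hb : sq2 p + e ^ 2 ≤ 3 * q ^ 2 := by nlinarith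
  have hxy : q ^ 2 / 4 ≤ p.1 * p.2 := by nlinarith
  calc 2 / 9 * (1 / 4) / (q * q) = 2 * (q ^ 2 / 4) / (3 * q ^ 2) ^ 2 := by field_simp; norm_num
    _ ≤ 2 * (p.1 * p.2) / (sq2 p + e ^ 2) ^ 2 := by gcongr

lemma gr_integral_lower (K : ℕ) :
    (K : ℝ) / 72 ≤ ∫ p, emag (gr (hh (((1 / 2 : ℝ) ^ K) ^ 2)) p) := by
  have ha : 0 < ((1 / 2 : ℝ) ^ K) ^ 2 := by positivity
  have hi := integrable_gr (hh_contDiff ha) (hcs_of_sq2 fun p hp => hh_zero _ hp.le)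
  have hm : ∀ k, MeasurableSet (DD k) := fun k => measurableSet_Ioc.prod measurableSet_Ioc
  refine le_trans ?_ (setIntegral_le_integral (s := ⋃ k ∈ Finset.range K, DD k) hi
    (Filter.Eventually.of_forall fun p => emag_nonneg _))
  rw [integral_biUnion_finset _ (fun k _ => hm k) (DD_disj _) (fun k _ => hi.integrableOn)]
  have : ∀ k ∈ Finset.range K, (1 / 72 : ℝ) ≤
      ∫ p in DD k, emag (gr (hh (((1 / 2 : ℝ) ^ K) ^ 2)) p) := by
    intro k hk
    have := setIntegral_ge_of_const_le (hm k) (μ := volume)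
      (by
        rw [DD, Measure.volume_eq_prod, Measure.prod_prod]
        simp [ENNReal.mul_eq_top])
      (fun p hp => DD_lower (Finset.mem_range.1 hk) hp) hi.integrableOn
    refine le_trans (le_of_eq ?_) this
    rw [DD_vol, smul_eq_mul, pow_succ]
    have : (1 / 2 : ℝ) ^ k ≠ 0 := by positivity
    field_simp
    norm_num
  have := Finset.sum_le_sum this
  simp only [Finset.sum_const, Finset.card_range, nsmul_eq_mul] at this
  linarith

lemma tile (n : ℕ) : ∃ h ψ : ℝ × ℝ → ℝ, ContDiff ℝ (⊤ : ℕ∞) h ∧ ContDiff ℝ (⊤ : ℕ∞) ψ ∧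
    (∀ p, 4 ≤ sq2 p → h p = 0) ∧ (∀ p, 4 ≤ sq2 p → ψ p = 0) ∧
    n * (∫ p, emag (FF h ψ p)) + 1 ≤ ∫ p, emag (gr h p) := by
  obtain ⟨C, hC⟩ := FF_integral_bound
  obtain ⟨K, hK⟩ := exists_nat_ge (72 * (n * C + 1))
  have he : 0 < (1 / 2 : ℝ) ^ K := by positivity
  have ha : 0 < ((1 / 2 : ℝ) ^ K) ^ 2 := by positivity
  refine ⟨hh (((1 / 2 : ℝ) ^ K) ^ 2), ps (((1 / 2 : ℝ) ^ K) ^ 2), hh_contDiff ha, ps_contDiff ha,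
    fun p hp => hh_zero _ hp, fun p hp => ps_zero _ hp, ?_⟩
  have h1 := gr_integral_lower K
  have h2 := mul_le_mul_of_nonneg_left (hC _ he) (Nat.cast_nonneg (α := ℝ) n)
  linarith

/-! Assembly -/

/-- translation vectors -/
def tr (k : ℕ × ℕ) : ℝ × ℝ := (5 * k.1, 5 * k.2)

lemma tr_sep {p : ℝ × ℝ} {j k : ℕ × ℕ} (hj : sq2 (p - tr j) ≤ 4) (hk : sq2 (p - tr k) ≤ 4) :
    j = k := by
  simp only [sq2, tr, Prod.fst_sub, Prod.snd_sub] at hj hk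
  have key : ∀ (x y z : ℝ) (a b : ℕ), (x - 5 * a) ^ 2 + y ^ 2 ≤ 4 → (x - 5 * b) ^ 2 + z ^ 2 ≤ 4 →
      a = b := by
    intro x y z a b h1 h2
    have a1 := abs_le.1 (abs_le_of_sq_le_sq (a := x - 5 * a) (b := 2) (by nlinarith) (by norm_num))
    have a2 := abs_le.1 (abs_le_of_sq_le_sq (a := x - 5 * b) (b := 2) (by nlinarith) (by norm_num))
    have b1 : (a : ℝ) < b + 1 := by linarith [a1.1, a1.2, a2.1, a2.2]
    have b2 : (b : ℝ) < a + 1 := by linarith [a1.1, a1.2, a2.1, a2.2]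
    have c1 : a < b + 1 := by exact_mod_cast b1
    have c2 : b < a + 1 := by exact_mod_cast b2
    omega
  ext
  · exact key _ _ _ _ _ hj hk
  · rw [add_comm] at hj hk
    exact key _ _ _ _ _ hj hk

/-- index set -/
def idx (N : ℕ) : Finset (ℕ × ℕ) := Finset.range N ×ˢ Finset.range N

/-- sum of translates -/
def TS (N : ℕ) (h : ℝ × ℝ → ℝ) (p : ℝ × ℝ) : ℝ := ∑ k ∈ idx N, h (p - tr k)

lemma sum_cases {V : Type*} [AddCommMonoid V] (N : ℕ) (v : ℝ × ℝ → V)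
    (hv : ∀ p, 4 < sq2 p → v p = 0) (p : ℝ × ℝ) :
    (∀ k ∈ idx N, v (p - tr k) = 0) ∨
    (∃ k ∈ idx N, sq2 (p - tr k) ≤ 4 ∧ ∀ j ∈ idx N, j ≠ k → v (p - tr j) = 0) := by
  by_cases h : ∃ k ∈ idx N, sq2 (p - tr k) ≤ 4
  · obtain ⟨k, hk, hk4⟩ := h
    refine Or.inr ⟨k, hk, hk4, fun j _ hjk => hv _ ?_⟩
    by_contra hcon
    exact hjk (tr_sep (not_lt.1 hcon) hk4)
  · push Not at h
    exact Or.inl fun k hk => hv _ (h k hk)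

lemma emag_sum_eq (N : ℕ) (v : ℝ × ℝ → ℝ × ℝ) (hv : ∀ p, 4 < sq2 p → v p = 0) (p : ℝ × ℝ) :
    emag (∑ k ∈ idx N, v (p - tr k)) = ∑ k ∈ idx N, emag (v (p - tr k)) := by
  rcases sum_cases N v hv p with h | ⟨k, hk, _, h⟩
  · rw [Finset.sum_eq_zero h, Finset.sum_eq_zero fun k hk => by rw [h k hk, emag_zero], emag_zero]
  · rw [Finset.sum_eq_single_of_mem k hk h,
      Finset.sum_eq_single_of_mem k hk fun j hj hjk => by rw [h j hj hjk, emag_zero]]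

lemma TS_contDiff (N : ℕ) {h : ℝ × ℝ → ℝ} (hh : ContDiff ℝ (⊤ : ℕ∞) h) :
    ContDiff ℝ (⊤ : ℕ∞) (TS N h) :=
  ContDiff.sum fun _ _ => hh.comp (contDiff_id.sub contDiff_const)

lemma TS_fderiv (N : ℕ) {h : ℝ × ℝ → ℝ} (hh : ContDiff ℝ (⊤ : ℕ∞) h) (p v : ℝ × ℝ) :
    fderiv ℝ (TS N h) p v = ∑ k ∈ idx N, fderiv ℝ h (p - tr k) v := by
  have : fderiv ℝ (TS N h) p = ∑ k ∈ idx N, fderiv ℝ h (p - tr k) := by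
    unfold TS
    rw [fderiv_fun_sum]
    · simp only [fderiv_comp_sub]
    · intro k _
      exact ((hh.comp (contDiff_id.sub contDiff_const)).differentiable (by simp)) p
  rw [this, ContinuousLinearMap.sum_apply]

lemma TS_gr (N : ℕ) {h : ℝ × ℝ → ℝ} (hh : ContDiff ℝ (⊤ : ℕ∞) h) (p : ℝ × ℝ) :
    gr (TS N h) p = ∑ k ∈ idx N, gr h (p - tr k) := by
  ext
  · rw [Prod.fst_sum]; exact TS_fderiv N hh p _
  · rw [Prod.snd_sum]; exact TS_fderiv N hh p _

lemma TS_FF (N : ℕ) {h ψ : ℝ × ℝ → ℝ} (hh : ContDiff ℝ (⊤ : ℕ∞) h)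
    (hψ : ContDiff ℝ (⊤ : ℕ∞) ψ) (p : ℝ × ℝ) :
    FF (TS N h) (TS N ψ) p = ∑ k ∈ idx N, FF h ψ (p - tr k) := by
  ext
  · rw [Prod.fst_sum]
    simp only [FF, pd1, pd2, TS_fderiv N hh, TS_fderiv N hψ, Finset.sum_add_distrib]
  · rw [Prod.snd_sum]
    simp only [FF, pd1, pd2, TS_fderiv N hh, TS_fderiv N hψ, Finset.sum_sub_distrib]

lemma idx_card (N : ℕ) : (idx N).card = N * N := by simp [idx]

lemma TS_integral (N : ℕ) {f : ℝ × ℝ → ℝ} (hf : Integrable f) :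
    Integrable (fun p => ∑ k ∈ idx N, f (p - tr k)) ∧
    ∫ p, ∑ k ∈ idx N, f (p - tr k) = N * N * ∫ p, f p := by
  have : ∀ k ∈ idx N, Integrable (fun p => f (p - tr k)) := fun k _ => hf.comp_sub_right _
  refine ⟨integrable_finsetSum _ this, ?_⟩
  rw [integral_finsetSum _ this]
  simp only [integral_sub_right_eq_self, Finset.sum_const, idx_card, nsmul_eq_mul]
  push_cast; ring

lemma gr_zero {h : ℝ × ℝ → ℝ} (h0 : ∀ p, 4 ≤ sq2 p → h p = 0) (p : ℝ × ℝ) (hp : 4 < sq2 p) :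
    gr h p = 0 := by
  have : h =ᶠ[nhds p] fun _ => 0 := by
    filter_upwards [sq2_contDiff.continuous.continuousAt.eventually (Ioi_mem_nhds hp)] with q hq
    exact h0 q (le_of_lt hq)
  simp [gr, pd1, pd2, this.fderiv_eq]

/-- Gaussian -/
def ga (p : ℝ × ℝ) : ℝ := Real.exp (-sq2 p)

lemma ga_contDiff : ContDiff ℝ (⊤ : ℕ∞) ga := sq2_contDiff.neg.exp

lemma ga_half_integrable {c : ℝ} (hc : 0 < c) :
    Integrable (fun p : ℝ × ℝ => Real.exp (-c * sq2 p)) := by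
  have h := (integrable_exp_neg_mul_sq hc).mul_prod (integrable_exp_neg_mul_sq hc)
  rw [← Measure.volume_eq_prod] at h
  refine h.congr (Filter.Eventually.of_forall fun p => ?_)
  simp only [sq2]
  rw [← Real.exp_add]; ring_nf

lemma ga_integrable : Integrable ga := by
  have h := ga_half_integrable one_pos
  simp only [neg_mul, one_mul] at h
  exact h

lemma ga_gr (p : ℝ × ℝ) : gr ga p = (-2 * ga p) • p := by
  have h1 : pd1 ga p = -2 * ga p * p.1 := by
    apply pd1_of ga_contDiff
    have := (((hasDerivAt_id p.1).fun_pow 2).add_const (p.2 ^ 2)).fun_neg.exp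
    refine HasDerivAt.congr_deriv this ?_
    simp only [ga, sq2, id]; push_cast; ring
  have h2 : pd2 ga p = -2 * ga p * p.2 := by
    apply pd2_of ga_contDiff
    have := (((hasDerivAt_id p.2).fun_pow 2).const_add (p.1 ^ 2)).fun_neg.exp
    refine HasDerivAt.congr_deriv this ?_
    simp only [ga, sq2, id]; push_cast; ring
  ext
  · simpa [gr] using h1
  · simpa [gr] using h2

lemma ga_gr_integrable : Integrable (fun p => emag (gr ga p)) := by
  refine ((ga_half_integrable (c := 1 / 2) (by norm_num)).const_mul 2).mono'
    (emag_continuous.comp (contDiff_gr ga_contDiff).continuous).aestronglyMeasurable ?_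
  filter_upwards with p
  rw [Real.norm_eq_abs, abs_of_nonneg (emag_nonneg _), ga_gr, emag_smul]
  have h0 := sq2_nonneg p
  have e1 : emag p ≤ Real.exp (sq2 p / 2) := by
    change Real.sqrt (sq2 p) ≤ _
    rw [Real.sqrt_le_left (by positivity), ← Real.exp_nat_mul]
    have := Real.add_one_le_exp (sq2 p)
    rw [show ((2 : ℕ) : ℝ) * (sq2 p / 2) = sq2 p by push_cast; ring]
    linarith
  have e2 : |-2 * ga p| = 2 * Real.exp (-sq2 p) := by
    rw [abs_mul, abs_of_pos (show 0 < ga p from Real.exp_pos _)]; norm_num [ga]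
  rw [e2]
  calc 2 * Real.exp (-sq2 p) * emag p ≤ 2 * Real.exp (-sq2 p) * Real.exp (sq2 p / 2) := by gcongr
    _ = 2 * Real.exp (-(1 / 2) * sq2 p) := by rw [mul_assoc, ← Real.exp_add]; ring_nf

/-- rescaled Gaussian -/
def gaR (R : ℝ) (p : ℝ × ℝ) : ℝ := ga (R⁻¹ • p)

lemma gaR_contDiff (R : ℝ) : ContDiff ℝ (⊤ : ℕ∞) (gaR R) :=
  ga_contDiff.comp (contDiff_const_smul R⁻¹)

lemma gaR_gr (R : ℝ) (p : ℝ × ℝ) : gr (gaR R) p = R⁻¹ • gr ga (R⁻¹ • p) := by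
  have : fderiv ℝ (gaR R) p = R⁻¹ • fderiv ℝ ga (R⁻¹ • p) := fderiv_comp_smul _
  simp [gr, pd1, pd2, this]

lemma gaR_integrable {R : ℝ} (hR : 0 < R) : Integrable (gaR R) :=
  (integrable_comp_smul_iff volume _ (inv_ne_zero hR.ne')).2 ga_integrable

lemma gaR_gr_integral {R : ℝ} (hR : 0 < R) :
    Integrable (fun p => emag (gr (gaR R) p)) ∧
    ∫ p, emag (gr (gaR R) p) = R * ∫ p, emag (gr ga p) := by
  have e : (fun p => emag (gr (gaR R) p)) =
      fun p => R⁻¹ * (fun q => emag (gr ga q)) (R⁻¹ • p) := by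
    ext p; rw [gaR_gr, emag_smul, abs_of_pos (inv_pos.2 hR)]
  rw [e]
  constructor
  · exact ((integrable_comp_smul_iff volume _ (inv_ne_zero hR.ne')).2 ga_gr_integrable).const_mul _
  · rw [integral_const_mul,
      Measure.integral_comp_inv_smul volume (fun q : ℝ × ℝ => emag (gr ga q)) R]
    simp only [Module.finrank_prod, Module.finrank_self, smul_eq_mul]
    norm_num
    field_simp

/-- Unnormalized version with explicit estimates. -/
lemma unnormalized (n : ℕ) : ∃ r ψ : ℝ × ℝ → ℝ, ContDiff ℝ (⊤ : ℕ∞) r ∧ ContDiff ℝ (⊤ : ℕ∞) ψ ∧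
    (∀ p, 0 < r p) ∧ Integrable r ∧ Integrable (fun p => emag (FF r ψ p)) ∧
    Integrable (fun p => emag (gr r p)) ∧
    n * (∫ p, emag (FF r ψ p)) ≤ ∫ p, emag (gr r p) := by
  obtain ⟨h, ψ, hs, ψs, h0, ψ0, hI⟩ := tile n
  have hc : HasCompactSupport h := hcs_of_sq2 fun p hp => h0 p hp.le
  have ψc : HasCompactSupport ψ := hcs_of_sq2 fun p hp => ψ0 p hp.le
  obtain ⟨B, hB⟩ := hc.exists_bound_of_continuous hs.continuous
  have hB0 : 0 ≤ B := (norm_nonneg _).trans (hB 0)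
  set M : ℝ := Real.exp 2 * (B + 1) with hM
  have hM0 : 0 < M := by positivity
  set C0 := ∫ p, emag (gr ga p) with hC0
  have hC00 : 0 ≤ C0 := integral_nonneg fun p => emag_nonneg _
  obtain ⟨N, hN⟩ := exists_nat_ge ((n + 1) * M * 5 * C0 + 1)
  have hN1 : (1 : ℝ) ≤ N := by
    have : 0 ≤ (n + 1) * M * 5 * C0 := by positivity
    linarith
  have hR : (0 : ℝ) < 5 * N := by linarith
  set R : ℝ := 5 * N with hRdef
  obtain ⟨g1, g2⟩ := gaR_gr_integral hR
  set r : ℝ × ℝ → ℝ := fun p => M * gaR R p + TS N h p with hr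
  have rs : ContDiff ℝ (⊤ : ℕ∞) r := (contDiff_const.mul (gaR_contDiff R)).add (TS_contDiff N hs)
  have fd : ∀ p v, fderiv ℝ r p v = M * fderiv ℝ (gaR R) p v + fderiv ℝ (TS N h) p v := by
    intro p v
    have d1 : DifferentiableAt ℝ (gaR R) p := (gaR_contDiff R).differentiable (by simp) p
    have d2 : DifferentiableAt ℝ (TS N h) p := (TS_contDiff N hs).differentiable (by simp) p
    rw [hr, fderiv_fun_add (d1.const_mul M) d2, fderiv_const_mul d1]
    simp
  have grr : ∀ p, gr r p = M • gr (gaR R) p + gr (TS N h) p := by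
    intro p; ext <;> simp [gr, pd1, pd2, fd]
  have FFr : ∀ p, FF r (TS N ψ) p = M • gr (gaR R) p + FF (TS N h) (TS N ψ) p := by
    intro p; ext <;> simp [gr, FF, pd1, pd2, fd] <;> ring
  obtain ⟨i1, i2⟩ := TS_integral N (integrable_gr hs hc)
  obtain ⟨j1, j2⟩ := TS_integral N (integrable_FF hs hc ψs ψc)
  obtain ⟨k1, -⟩ := TS_integral N (hs.continuous.integrable_of_hasCompactSupport hc)
  have bF : ∀ p, emag (FF r (TS N ψ) p) ≤
      M * emag (gr (gaR R) p) + ∑ k ∈ idx N, emag (FF h ψ (p - tr k)) := by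
    intro p
    rw [FFr, TS_FF N hs ψs]
    refine (emag_add _ _).trans ?_
    rw [emag_smul, abs_of_pos hM0]
    gcongr
    exact emag_sum _ _
  have bG : ∀ p, emag (gr r p) ≤
      M * emag (gr (gaR R) p) + ∑ k ∈ idx N, emag (gr h (p - tr k)) := by
    intro p
    rw [grr, TS_gr N hs]
    refine (emag_add _ _).trans ?_
    rw [emag_smul, abs_of_pos hM0]
    gcongr
    exact emag_sum _ _
  have bG' : ∀ p, ∑ k ∈ idx N, emag (gr h (p - tr k)) - M * emag (gr (gaR R) p) ≤
      emag (gr r p) := by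
    intro p
    rw [← emag_sum_eq N (gr h) (gr_zero h0), ← TS_gr N hs]
    have e : gr (TS N h) p = gr r p + (-M) • gr (gaR R) p := by rw [grr]; module
    have := emag_add (gr r p) ((-M) • gr (gaR R) p)
    rw [← e, emag_smul, abs_neg, abs_of_pos hM0] at this
    linarith
  have intF : Integrable (fun p => emag (FF r (TS N ψ) p)) := by
    refine ((g1.const_mul M).add j1).mono' (emag_continuous.comp
      (contDiff_FF rs (TS_contDiff N ψs)).continuous).aestronglyMeasurable ?_
    filter_upwards with p
    rw [Real.norm_eq_abs, abs_of_nonneg (emag_nonneg _)]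
    exact bF p
  have intG : Integrable (fun p => emag (gr r p)) := by
    refine ((g1.const_mul M).add i1).mono' (emag_continuous.comp
      (contDiff_gr rs).continuous).aestronglyMeasurable ?_
    filter_upwards with p
    rw [Real.norm_eq_abs, abs_of_nonneg (emag_nonneg _)]
    exact bG p
  refine ⟨r, TS N ψ, rs, TS_contDiff N ψs, ?_, ((gaR_integrable hR).const_mul M).add k1,
    intF, intG, ?_⟩
  · intro p
    have gpos : 0 < gaR R p := Real.exp_pos _
    rcases sum_cases N h (fun p hp => h0 p hp.le) p with hz | ⟨k, hk, hk4, hz⟩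
    · have : TS N h p = 0 := Finset.sum_eq_zero hz
      simp only [hr, this]; positivity
    · have e : TS N h p = h (p - tr k) := Finset.sum_eq_single_of_mem k hk hz
      have hb := (abs_le.1 (hB (p - tr k))).1
      simp only [idx, Finset.mem_product, Finset.mem_range] at hk
      have kk1 : (k.1 : ℝ) + 1 ≤ N := by exact_mod_cast hk.1
      have kk2 : (k.2 : ℝ) + 1 ≤ N := by exact_mod_cast hk.2
      have kp1 : (0 : ℝ) ≤ k.1 := Nat.cast_nonneg _
      have kp2 : (0 : ℝ) ≤ k.2 := Nat.cast_nonneg _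
      simp only [sq2, tr, Prod.fst_sub, Prod.snd_sub] at hk4
      have a1 := abs_le.1 (abs_le_of_sq_le_sq (a := p.1 - 5 * k.1) (b := 2) (by nlinarith)
        (by norm_num))
      have a2 := abs_le.1 (abs_le_of_sq_le_sq (a := p.2 - 5 * k.2) (b := 2) (by nlinarith)
        (by norm_num))
      have c1 : p.1 ^ 2 ≤ R ^ 2 := sq_le_sq' (by linarith [a1.1]) (by linarith [a1.2])
      have c2 : p.2 ^ 2 ≤ R ^ 2 := sq_le_sq' (by linarith [a2.1]) (by linarith [a2.2])
      have hsq : sq2 (R⁻¹ • p) ≤ 2 := by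
        rw [sq2_smul, inv_pow, inv_mul_le_iff₀ (by positivity), sq2]; linarith
      have hg : Real.exp (-2) ≤ gaR R p := Real.exp_le_exp.2 (by linarith)
      have : B + 1 ≤ M * gaR R p := by
        calc B + 1 = M * Real.exp (-2) := by
              rw [hM, mul_comm (Real.exp 2), mul_assoc, ← Real.exp_add]; simp
          _ ≤ _ := by gcongr
      simp only [hr, e]; linarith
  · have u1 := integral_mono intF ((g1.const_mul M).add j1) bF
    have u2 := integral_mono (i1.sub (g1.const_mul M)) intG bG'
    simp only [Pi.add_apply] at u1
    simp only [Pi.sub_apply] at u2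
    rw [integral_add (g1.const_mul M) j1, integral_const_mul, g2, j2] at u1
    rw [integral_sub i1 (g1.const_mul M), integral_const_mul, g2, i2] at u2
    have hn0 : (0 : ℝ) ≤ n := Nat.cast_nonneg n
    have u3 := mul_le_mul_of_nonneg_left u1 hn0
    have hNN : (0 : ℝ) ≤ N * N := by positivity
    have u4 := mul_le_mul_of_nonneg_left hI hNN
    have u5 := mul_le_mul_of_nonneg_left hN (show (0 : ℝ) ≤ N by linarith)
    rw [hRdef] at u2 u3
    nlinarith

/-- For every `n ∈ ℕ` there exist a smooth probability density `ϱ_n` on `ℝ²` and a smooth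
vector field `b_n` with `|b_n|ϱ_n ∈ L¹(ℝ²)` such that `Δϱ_n − div(ϱ_n b_n) = 0` in the weak
sense and `∫ |∇ϱ_n| dx ≥ n ∫ |b_n| ϱ_n dx`. -/
theorem no_L1_gradient_estimate_for_FPK (n : ℕ) :
    ∃ (ϱ : ℝ × ℝ → ℝ) (b : ℝ × ℝ → ℝ × ℝ),
      ContDiff ℝ (⊤ : ℕ∞) ϱ ∧ (∀ p, 0 ≤ ϱ p) ∧ (∫ p, ϱ p = 1) ∧
      ContDiff ℝ (⊤ : ℕ∞) b ∧
      Integrable (fun p => emag (b p) * ϱ p) ∧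
      (∀ φ : ℝ × ℝ → ℝ, IsTest φ →
        ∫ p, (pd1 (pd1 φ) p + pd2 (pd2 φ) p + fderiv ℝ φ p (b p)) * ϱ p = 0) ∧
      (∫⁻ p, ENNReal.ofReal (emag (pd1 ϱ p, pd2 ϱ p))) ≥
        n * ∫⁻ p, ENNReal.ofReal (emag (b p) * ϱ p) := by
  obtain ⟨r, ψ, rs, ψs, rpos, rint, intF, intG, hI⟩ := unnormalized n
  have Z0 : 0 < ∫ p, r p := by
    rw [integral_pos_iff_support_of_nonneg (fun p => (rpos p).le) rint]
    have : Function.support r = Set.univ := by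
      ext p; simp [(rpos p).ne']
    rw [this]; simp
  set Z := ∫ p, r p with hZ
  have e1 : ∀ p, emag ((r p)⁻¹ • FF r ψ p) * (Z⁻¹ * r p) = Z⁻¹ * emag (FF r ψ p) := by
    intro p
    have := rpos p
    rw [emag_smul, abs_of_pos (inv_pos.2 this)]
    field_simp
  have e2 : ∀ p, emag (pd1 (fun p => Z⁻¹ * r p) p, pd2 (fun p => Z⁻¹ * r p) p) =
      Z⁻¹ * emag (gr r p) := by
    intro p
    have : (pd1 (fun p => Z⁻¹ * r p) p, pd2 (fun p => Z⁻¹ * r p) p) = Z⁻¹ • gr r p := by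
      have d : DifferentiableAt ℝ r p := rs.differentiable (by simp) p
      simp [gr, pd1, pd2, fderiv_const_mul d]
    rw [this, emag_smul, abs_of_pos (inv_pos.2 Z0)]
  refine ⟨fun p => Z⁻¹ * r p, fun p => (r p)⁻¹ • FF r ψ p, contDiff_const.mul rs,
    fun p => mul_nonneg (inv_pos.2 Z0).le (rpos p).le, ?_,
    (rs.inv fun p => (rpos p).ne').smul (contDiff_FF rs ψs), ?_, ?_, ?_⟩
  · rw [integral_const_mul, ← hZ, inv_mul_cancel₀ Z0.ne']
  · simp only [e1]
    exact intF.const_mul _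
  · intro φ hφ
    have h := weak_eq rs ψs hφ
    have : ∀ p, (pd1 (pd1 φ) p + pd2 (pd2 φ) p + fderiv ℝ φ p ((r p)⁻¹ • FF r ψ p)) *
        (Z⁻¹ * r p) =
        Z⁻¹ * ((pd1 (pd1 φ) p + pd2 (pd2 φ) p) * r p + fderiv ℝ φ p (FF r ψ p)) := by
      intro p
      have := (rpos p).ne'
      rw [map_smul, smul_eq_mul]
      field_simp
    simp only [this]
    rw [integral_const_mul, h, mul_zero]
  · simp only [e1, e2]
    have hZi : 0 ≤ Z⁻¹ := (inv_pos.2 Z0).le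
    rw [← ofReal_integral_eq_lintegral_ofReal (intF.const_mul _)
        (Filter.Eventually.of_forall fun p => mul_nonneg hZi (emag_nonneg _)),
      ← ofReal_integral_eq_lintegral_ofReal (intG.const_mul _)
        (Filter.Eventually.of_forall fun p => mul_nonneg hZi (emag_nonneg _)),
      ← ENNReal.ofReal_natCast, ← ENNReal.ofReal_mul (Nat.cast_nonneg n)]
    apply ENNReal.ofReal_le_ofReal
    rw [integral_const_mul, integral_const_mul]
    have := mul_le_mul_of_nonneg_left hI hZi
    linarith
end
end
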